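/- arXiv:2106.15676 — 6 statements merged into one kernel-verified Lean document; each statement's English description precedes it below -/
import Mathlib

section
/- Let d ≥ 2, κ ≥ 1, and let A₁,…,A_κ ∈ SL(d,ℝ). For ω ∈ Σ_κ := {1,…,κ}^ℤ and n ≥ 1 write A⁽ⁿ⁾(ω) := A_{ω_{n−1}} ⋯ A_{ω_1} A_{ω_0}. Assume: (1) the closure in SL(d,ℝ) of the subgroup generated by {A₁,…,A_κ} is not compact; (2) the family (A₁,…,A_κ) is strongly projectively accessible. Then for every nonzero vector v ∈ ℝ^d there exists a residual subset 𝓡_v ⊆ Σ_κ such that for every ω ∈ 𝓡_v one has liminf_{n→∞} (1/n) log ‖A⁽ⁿ⁾(ω) v‖ < limsup_{n→∞} (1/n) log ‖A⁽ⁿ⁾(ω) v‖ (Euclidean norm on ℝ^d). -/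
open Filter Topology Metric

noncomputable section

/-- The action of a `d × d` real matrix on Euclidean space `ℝ^d`. -/
def mvec {d : ℕ} (B : Matrix (Fin d) (Fin d) ℝ) (v : EuclideanSpace ℝ (Fin d)) :
    EuclideanSpace ℝ (Fin d) :=
  Matrix.toEuclideanLin B v

/-- The random product `A⁽ⁿ⁾(ω) = A_{ω_{n-1}} ⋯ A_{ω_1} A_{ω_0}` of the matrices `A i`
along the two-sided sequence `ω`. -/
def cocycleProd {d κ : ℕ} (A : Fin κ → Matrix.SpecialLinearGroup (Fin d) ℝ)
    (ω : ℤ → Fin κ) : ℕ → Matrix.SpecialLinearGroup (Fin d) ℝ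
  | 0 => 1
  | n + 1 => A (ω n) * cocycleProd A ω n

/-- The projectivized action `g_B(v) = B·v / ‖B·v‖` on the unit sphere. -/
def projMap {d : ℕ} (B : Matrix (Fin d) (Fin d) ℝ) (v : EuclideanSpace ℝ (Fin d)) :
    EuclideanSpace ℝ (Fin d) :=
  ‖mvec B v‖⁻¹ • mvec B v

/-- The composition `g_{A_{ω_{p-1}}} ∘ ⋯ ∘ g_{A_{ω_0}}` of the projectivized maps along
a finite word `w = (ω₀, …, ω_{p-1})`. -/
def projWordComp {d κ : ℕ} (A : Fin κ → Matrix.SpecialLinearGroup (Fin d) ℝ)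
    (w : List (Fin κ)) (v : EuclideanSpace ℝ (Fin d)) : EuclideanSpace ℝ (Fin d) :=
  w.foldl (fun u i => projMap (A i : Matrix (Fin d) (Fin d) ℝ) u) v

/-- The unit sphere `S^{d-1} ⊆ ℝ^d`, a double cover of the projective space. -/
def unitSphere (d : ℕ) : Set (EuclideanSpace ℝ (Fin d)) :=
  Metric.sphere (0 : EuclideanSpace ℝ (Fin d)) 1

/-- Strong projective accessibility of the family `(A₁, …, A_κ)`, formulated on the
unit sphere: for every `ε > 0` there is `K(ε)` such that any `ε`-ball around a direction
can be mapped, by the projective action of a word of length at most `K(ε)`, onto a set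
containing a definite sub-ball of any prescribed ball of radius `δ ≤ ε`. -/
def StronglyProjectivelyAccessible {d κ : ℕ}
    (A : Fin κ → Matrix.SpecialLinearGroup (Fin d) ℝ) : Prop :=
  ∀ ε : ℝ, 0 < ε → ∃ K : ℕ, ∀ v₁ ∈ unitSphere d, ∀ v₂ ∈ unitSphere d,
    ∀ δ : ℝ, 0 < δ → δ ≤ ε →
      ∃ p ≤ K, ∃ w : List (Fin κ), w.length = p ∧ ∃ u ∈ unitSphere d,
        Metric.ball u (min (ε / 4) (δ / 2)) ∩ unitSphere d ⊆
          (projWordComp A w '' (Metric.ball v₁ ε ∩ unitSphere d)) ∩ Metric.ball v₂ δ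

/-- The representation of `SL(d,ℝ)` by continuous linear maps of Euclidean space. -/
def slAction (d : ℕ) : Matrix.SpecialLinearGroup (Fin d) ℝ →*
    (EuclideanSpace ℝ (Fin d) →L[ℝ] EuclideanSpace ℝ (Fin d)) where
  toFun B := Matrix.toEuclideanCLM (𝕜 := ℝ) (B : Matrix (Fin d) (Fin d) ℝ)
  map_one' := by simp
  map_mul' := by simp

/-- The product of the matrices along a finite word, the first letter acting first. -/
def wordProd {d κ : ℕ} (A : Fin κ → Matrix.SpecialLinearGroup (Fin d) ℝ)
    (w : List (Fin κ)) : Matrix.SpecialLinearGroup (Fin d) ℝ :=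
  (w.map A).reverse.prod

/-- The linear action on Euclidean space of the product along a finite word. -/
def wordAct {d κ : ℕ} (A : Fin κ → Matrix.SpecialLinearGroup (Fin d) ℝ)
    (w : List (Fin κ)) : EuclideanSpace ℝ (Fin d) →L[ℝ] EuclideanSpace ℝ (Fin d) :=
  slAction d (wordProd A w)

/-- The largest operator norm of a product along a word of length `n`. -/
def maxNorm {d κ : ℕ} (A : Fin κ → Matrix.SpecialLinearGroup (Fin d) ℝ) (n : ℕ) : ℝ :=
  ⨆ w : List.Vector (Fin κ) n, ‖wordAct A w.1‖

/-- The word formed by the letters `ω₀, …, ω_{n-1}`. -/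
def firstLetters {κ : ℕ} (ω : ℤ → Fin κ) (n : ℕ) : List (Fin κ) :=
  List.ofFn fun i : Fin n => ω (i : ℕ)

section SpecialLinear

variable {d : ℕ}

lemma mvec_eq_slAction (B : Matrix.SpecialLinearGroup (Fin d) ℝ)
    (v : EuclideanSpace ℝ (Fin d)) :
    mvec (B : Matrix (Fin d) (Fin d) ℝ) v = slAction d B v := rfl

lemma slAction_inv_apply (B : Matrix.SpecialLinearGroup (Fin d) ℝ)
    (v : EuclideanSpace ℝ (Fin d)) : slAction d B⁻¹ (slAction d B v) = v := by
  have h : slAction d B⁻¹ * slAction d B = 1 := by rw [← map_mul, inv_mul_cancel, map_one]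
  exact congrArg (fun f => f v) h

lemma slAction_apply_inv (B : Matrix.SpecialLinearGroup (Fin d) ℝ)
    (v : EuclideanSpace ℝ (Fin d)) : slAction d B (slAction d B⁻¹ v) = v := by
  simpa using slAction_inv_apply B⁻¹ v

lemma slAction_ne_zero (B : Matrix.SpecialLinearGroup (Fin d) ℝ)
    {v : EuclideanSpace ℝ (Fin d)} (hv : v ≠ 0) : slAction d B v ≠ 0 := fun h => by
  have := slAction_inv_apply B v
  rw [h, map_zero] at this
  exact hv this.symm

lemma one_le_norm_slAction [NeZero d] (B : Matrix.SpecialLinearGroup (Fin d) ℝ) :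
    1 ≤ ‖slAction d B‖ := by
  by_contra! h
  have h1 : Tendsto (fun n : ℕ => slAction d B ^ n) atTop (𝓝 0) :=
    tendsto_pow_atTop_nhds_zero_of_norm_lt_one h
  have hdet : Continuous fun f : EuclideanSpace ℝ (Fin d) →L[ℝ] EuclideanSpace ℝ (Fin d) =>
      ((Matrix.toEuclideanCLM (𝕜 := ℝ) (n := Fin d)).symm f).det :=
    Continuous.matrix_det
      (LinearMap.continuous_of_finiteDimensional
        ((Matrix.toEuclideanCLM (𝕜 := ℝ) (n := Fin d)).symm.toAlgEquiv.toLinearMap))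
  have h2 := (hdet.tendsto 0).comp h1
  have h3 : ∀ n : ℕ, ((Matrix.toEuclideanCLM (𝕜 := ℝ) (n := Fin d)).symm
      (slAction d B ^ n)).det = 1 := fun n => by
    rw [← map_pow]
    simp [slAction]
  have h4 : Tendsto (fun _ : ℕ => (1 : ℝ)) atTop (𝓝 0) := by
    refine (h2.congr h3).trans_eq ?_
    simp [Matrix.det_zero]
  exact one_ne_zero (tendsto_nhds_unique tendsto_const_nhds h4)

/-- A matrix of determinant one cannot expand every vector. -/
lemma le_one_of_forall_le_norm_slAction [NeZero d] (B : Matrix.SpecialLinearGroup (Fin d) ℝ)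
    {s : ℝ} (h : ∀ x, ‖x‖ = 1 → s ≤ ‖slAction d B x‖) : s ≤ 1 := by
  by_contra! hs
  have hs0 : 0 < s := one_pos.trans hs
  have h1 : ∀ x, s * ‖x‖ ≤ ‖slAction d B x‖ := fun x => by
    rcases eq_or_ne x 0 with rfl | hx
    · simp
    have := h (‖x‖⁻¹ • x) (norm_smul_inv_norm hx)
    rw [map_smul, norm_smul, norm_inv, norm_norm, ← div_eq_inv_mul,
      le_div_iff₀ (norm_pos_iff.2 hx)] at this
    exact this
  have h2 : ‖slAction d B⁻¹‖ ≤ s⁻¹ := by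
    refine ContinuousLinearMap.opNorm_le_bound _ (inv_nonneg.2 hs0.le) fun y => ?_
    have := h1 (slAction d B⁻¹ y)
    rw [slAction_apply_inv] at this
    rwa [inv_mul_eq_div, le_div_iff₀' hs0]
  exact absurd ((one_le_norm_slAction B⁻¹).trans h2) (not_le.2 (inv_lt_one_of_one_lt₀ hs))

end SpecialLinear

section Words

variable {d κ : ℕ} (A : Fin κ → Matrix.SpecialLinearGroup (Fin d) ℝ)

lemma wordProd_append (w w' : List (Fin κ)) :
    wordProd A (w ++ w') = wordProd A w' * wordProd A w := by
  simp [wordProd]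

lemma wordAct_append (w w' : List (Fin κ)) :
    wordAct A (w ++ w') = wordAct A w' * wordAct A w := by
  simp [wordAct, wordProd_append]

lemma wordAct_append_apply (w w' : List (Fin κ)) (v : EuclideanSpace ℝ (Fin d)) :
    wordAct A (w ++ w') v = wordAct A w' (wordAct A w v) := by
  rw [wordAct_append]; rfl

lemma wordAct_nil : wordAct A [] = 1 := by simp [wordAct, wordProd]

lemma wordAct_singleton (i : Fin κ) : wordAct A [i] = slAction d (A i) := by
  simp [wordAct, wordProd]

lemma wordAct_ne_zero (w : List (Fin κ)) {v : EuclideanSpace ℝ (Fin d)} (hv : v ≠ 0) :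
    wordAct A w v ≠ 0 := slAction_ne_zero _ hv

lemma firstLetters_succ (ω : ℤ → Fin κ) (n : ℕ) :
    firstLetters ω (n + 1) = firstLetters ω n ++ [ω n] := by
  rw [firstLetters, List.ofFn_succ_last]
  simp [firstLetters]

lemma length_firstLetters (ω : ℤ → Fin κ) (n : ℕ) : (firstLetters ω n).length = n := by
  simp [firstLetters]

lemma cocycleProd_eq_wordProd (ω : ℤ → Fin κ) (n : ℕ) :
    cocycleProd A ω n = wordProd A (firstLetters ω n) := by
  induction n with
  | zero => simp [cocycleProd, wordProd, firstLetters]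
  | succ n ih => rw [firstLetters_succ, wordProd_append, ← ih]; simp [cocycleProd, wordProd]

lemma projWordComp_eq (w : List (Fin κ)) {v : EuclideanSpace ℝ (Fin d)} (hv : ‖v‖ = 1) :
    projWordComp A w v = ‖wordAct A w v‖⁻¹ • wordAct A w v := by
  induction w generalizing v with
  | nil => simp [projWordComp, wordAct_nil, hv]
  | cons i w ih =>
    have hv0 : v ≠ 0 := norm_ne_zero_iff.1 (by simp [hv])
    have h0 := slAction_ne_zero (A i) hv0
    have hn : ‖‖slAction d (A i) v‖⁻¹ • slAction d (A i) v‖ = 1 := norm_smul_inv_norm h0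
    have h1 : projWordComp A (i :: w) v =
        projWordComp A w (‖slAction d (A i) v‖⁻¹ • slAction d (A i) v) := rfl
    have h2 : wordAct A (i :: w) v = wordAct A w (slAction d (A i) v) := by
      rw [← wordAct_singleton, ← wordAct_append_apply]; rfl
    rw [h1, ih hn, h2, map_smul, norm_smul, smul_smul, norm_inv, norm_norm,
      mul_inv, inv_inv, mul_right_comm, mul_inv_cancel₀ (norm_ne_zero_iff.2 h0), one_mul]

lemma exists_bound_of_length_le (f : List (Fin κ) → ℝ) (N : ℕ) :
    ∃ C, 1 ≤ C ∧ ∀ w : List (Fin κ), w.length ≤ N → f w ≤ C := by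
  obtain ⟨C, hC⟩ := ((List.finite_length_le (Fin κ) N).image f).bddAbove
  exact ⟨max 1 C, le_max_left _ _, fun w hw => (hC ⟨w, hw, rfl⟩).trans (le_max_right _ _)⟩

lemma norm_wordAct_le (w : List (Fin κ)) : ‖wordAct A w‖ ≤ maxNorm A w.length :=
  le_ciSup (f := fun u : List.Vector (Fin κ) w.length => ‖wordAct A u.1‖)
    (Set.finite_range _).bddAbove ⟨w, rfl⟩

lemma norm_wordAct_apply_le (w : List (Fin κ)) (v : EuclideanSpace ℝ (Fin d)) :
    ‖wordAct A w v‖ ≤ maxNorm A w.length * ‖v‖ :=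
  (wordAct A w).le_of_opNorm_le (norm_wordAct_le A w) v

lemma exists_norm_eq_maxNorm [NeZero κ] (n : ℕ) :
    ∃ w : List (Fin κ), w.length = n ∧ ‖wordAct A w‖ = maxNorm A n := by
  have : Nonempty (List.Vector (Fin κ) n) := ⟨List.Vector.replicate n 0⟩
  obtain ⟨w, hw⟩ := exists_eq_ciSup_of_finite
    (f := fun u : List.Vector (Fin κ) n => ‖wordAct A u.1‖)
  exact ⟨w.1, w.2, hw⟩

lemma one_le_maxNorm [NeZero d] [NeZero κ] (n : ℕ) : 1 ≤ maxNorm A n := by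
  obtain ⟨w, -, hw⟩ := exists_norm_eq_maxNorm A n
  exact hw ▸ one_le_norm_slAction _

lemma maxNorm_pos [NeZero d] [NeZero κ] (n : ℕ) : 0 < maxNorm A n :=
  one_pos.trans_le (one_le_maxNorm A n)

lemma maxNorm_add_le [NeZero d] [NeZero κ] (m n : ℕ) :
    maxNorm A (m + n) ≤ maxNorm A m * maxNorm A n := by
  obtain ⟨w, hw, hn⟩ := exists_norm_eq_maxNorm A (m + n)
  rw [← hn, ← List.take_append_drop m w, wordAct_append, mul_comm]
  have h1 := norm_wordAct_le A (w.take m)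
  have h2 := norm_wordAct_le A (w.drop m)
  have e1 : (w.take m).length = m := by simp [hw]
  have e2 : (w.drop m).length = n := by simp [hw]
  rw [e1] at h1
  rw [e2] at h2
  exact (norm_mul_le _ _).trans (mul_le_mul h2 h1 (norm_nonneg _) (maxNorm_pos A n).le)

/-- Uniform exponential bounds for the action of words on a vector. -/
lemma exists_pow_bounds :
    ∃ L : ℝ, 1 ≤ L ∧ ∀ (w : List (Fin κ)) (v : EuclideanSpace ℝ (Fin d)),
      ‖wordAct A w v‖ ≤ L ^ w.length * ‖v‖ ∧ ‖v‖ ≤ L ^ w.length * ‖wordAct A w v‖ := by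
  obtain ⟨C₁, hC₁, h₁⟩ := exists_bound_of_length_le (fun w => ‖wordAct A w‖) 1
  obtain ⟨C₂, hC₂, h₂⟩ := exists_bound_of_length_le (fun w => ‖slAction d (wordProd A w)⁻¹‖) 1
  refine ⟨max C₁ C₂, hC₁.trans (le_max_left _ _), fun w => ?_⟩
  have hL : 0 ≤ max C₁ C₂ := (zero_le_one.trans hC₁).trans (le_max_left _ _)
  induction w with
  | nil => simp [wordAct_nil]
  | cons i w ih =>
    intro v
    have e : wordAct A (i :: w) v = wordAct A w (wordAct A [i] v) := by
      rw [← wordAct_append_apply]; rfl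
    obtain ⟨ih₁, ih₂⟩ := ih (wordAct A [i] v)
    have b₁ : ‖wordAct A [i] v‖ ≤ max C₁ C₂ * ‖v‖ :=
      (wordAct A [i]).le_of_opNorm_le ((h₁ [i] (by simp)).trans (le_max_left _ _)) v
    have b₂ : ‖v‖ ≤ max C₁ C₂ * ‖wordAct A [i] v‖ := by
      have := (slAction d (wordProd A [i])⁻¹).le_of_opNorm_le
        ((h₂ [i] (by simp)).trans (le_max_right C₁ _)) (wordAct A [i] v)
      rwa [wordAct, slAction_inv_apply] at this
    rw [e, List.length_cons, pow_succ]
    constructor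
    · calc _ ≤ _ := ih₁
        _ ≤ max C₁ C₂ ^ w.length * (max C₁ C₂ * ‖v‖) := by gcongr
        _ = _ := by ring
    · calc _ ≤ _ := b₂
        _ ≤ max C₁ C₂ * (max C₁ C₂ ^ w.length * ‖wordAct A w (wordAct A [i] v)‖) := by gcongr
        _ = _ := by ring

end Words

section Accessibility

variable {d κ : ℕ} {A : Fin κ → Matrix.SpecialLinearGroup (Fin d) ℝ}

lemma StronglyProjectivelyAccessible.exists_word (hacc : StronglyProjectivelyAccessible A)
    {ε : ℝ} (hε : 0 < ε) :
    ∃ K : ℕ, ∀ x y : EuclideanSpace ℝ (Fin d), ‖x‖ = 1 → ‖y‖ = 1 → ∀ δ, 0 < δ → δ ≤ ε →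
      ∃ w : List (Fin κ), w.length ≤ K ∧ ∃ z, ‖z‖ = 1 ∧ ‖z - x‖ < ε ∧
        ‖‖wordAct A w z‖⁻¹ • wordAct A w z - y‖ < δ := by
  obtain ⟨K, hK⟩ := hacc ε hε
  refine ⟨K, fun x y hx hy δ hδ hδε => ?_⟩
  obtain ⟨p, hp, w, hw, u, hu, hsub⟩ := hK x (by simpa [unitSphere] using hx) y
    (by simpa [unitSphere] using hy) δ hδ hδε
  obtain ⟨⟨z, ⟨hz, hzs⟩, rfl⟩, hball⟩ := hsub ⟨mem_ball_self (by positivity), hu⟩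
  have hz1 : ‖z‖ = 1 := by simpa [unitSphere] using hzs
  refine ⟨w, hw ▸ hp, z, hz1, by rwa [mem_ball, dist_eq_norm] at hz, ?_⟩
  rwa [projWordComp_eq A w hz1, mem_ball, dist_eq_norm] at hball

/-- The linear action of an accessible family is irreducible. -/
lemma StronglyProjectivelyAccessible.exists_apply_wordAct_ne_zero
    (hacc : StronglyProjectivelyAccessible A) {u : EuclideanSpace ℝ (Fin d)} (hu : ‖u‖ = 1)
    {B : EuclideanSpace ℝ (Fin d) →L[ℝ] EuclideanSpace ℝ (Fin d)} (hB : B ≠ 0) :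
    ∃ w, B (wordAct A w u) ≠ 0 := by
  by_contra! h
  set V : Submodule ℝ (EuclideanSpace ℝ (Fin d)) :=
    Submodule.span ℝ (Set.range fun w => wordAct A w u) with hV
  have hVB : V ≤ LinearMap.ker (B : EuclideanSpace ℝ (Fin d) →ₗ[ℝ] _) :=
    Submodule.span_le.2 (by rintro _ ⟨w, rfl⟩; exact h w)
  have hVtop : V ≠ ⊤ := fun htop => hB (by
    ext1 x
    exact hVB (htop ▸ Submodule.mem_top : x ∈ V))
  have huV : u ∈ V := Submodule.subset_span ⟨[], by simp [wordAct_nil]⟩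
  have hinv : ∀ w, ∀ x ∈ V, slAction d (wordProd A w)⁻¹ x ∈ V := fun w x hx => by
    have hinj : Function.Injective
        (wordAct A w : EuclideanSpace ℝ (Fin d) →ₗ[ℝ] EuclideanSpace ℝ (Fin d)) :=
      Function.LeftInverse.injective (g := slAction d (wordProd A w)⁻¹)
        fun y => slAction_inv_apply _ y
    have hle : V.map (wordAct A w : EuclideanSpace ℝ (Fin d) →ₗ[ℝ] _) ≤ V := by
      rw [hV, Submodule.map_span, Submodule.span_le]
      rintro _ ⟨_, ⟨w', rfl⟩, rfl⟩
      exact Submodule.subset_span ⟨w' ++ w, wordAct_append_apply A w' w u⟩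
    have heq := Submodule.eq_of_le_of_finrank_eq hle
      (Submodule.equivMapOfInjective _ hinj V).finrank_eq.symm
    obtain ⟨y, hy, rfl⟩ : x ∈ V.map (wordAct A w : EuclideanSpace ℝ (Fin d) →ₗ[ℝ] _) := by
      rwa [heq]
    exact (slAction_inv_apply (wordProd A w) y).symm ▸ hy
  obtain ⟨e₀, he₀V, he₀⟩ := Submodule.exists_mem_ne_zero_of_ne_bot
    (mt Submodule.orthogonal_eq_bot_iff.1 hVtop)
  obtain ⟨e, heV, he⟩ : ∃ e ∈ Vᗮ, ‖e‖ = 1 :=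
    ⟨‖e₀‖⁻¹ • e₀, Vᗮ.smul_mem _ he₀V, norm_smul_inv_norm he₀⟩
  obtain ⟨K, hK⟩ := hacc.exists_word (ε := 1 / 2) (by norm_num)
  obtain ⟨C, hC, hCb⟩ := exists_bound_of_length_le
    (fun w => max ‖wordAct A w‖ ‖slAction d (wordProd A w)⁻¹‖) K
  have hC0 : 0 < C := by linarith
  obtain ⟨w, hw, z, hz, hze, hy⟩ := hK e u he hu (1 / (2 * C ^ 2)) (by positivity) (by
    gcongr; nlinarith)
  have hz0 : z ≠ 0 := norm_ne_zero_iff.1 (by simp [hz])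
  have hc0 : ‖wordAct A w z‖ ≠ 0 := norm_ne_zero_iff.2 (wordAct_ne_zero A w hz0)
  have hcC : ‖wordAct A w z‖ ≤ C := by
    simpa [hz] using (wordAct A w).le_of_opNorm_le ((le_max_left _ _).trans (hCb w hw)) z
  set y := ‖wordAct A w z‖⁻¹ • wordAct A w z
  have hzy : z = ‖wordAct A w z‖ • slAction d (wordProd A w)⁻¹ y := by
    rw [← map_smul, smul_smul, mul_inv_cancel₀ hc0, one_smul]
    exact (slAction_inv_apply _ z).symm
  have hiu : inner ℝ e (slAction d (wordProd A w)⁻¹ u) = 0 :=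
    Submodule.inner_left_of_mem_orthogonal (hinv w u huV) heV
  have hi : inner ℝ e z = ‖wordAct A w z‖ * inner ℝ e (slAction d (wordProd A w)⁻¹ (y - u)) := by
    rw [map_sub, inner_sub_right, hiu, sub_zero, ← real_inner_smul_right, ← hzy]
  have hlow : 1 / 2 < inner ℝ e z := by
    have h1 : inner ℝ e z = 1 + inner ℝ e (z - e) := by
      rw [inner_sub_right, real_inner_self_eq_norm_sq, he]; ring
    have h2 := abs_le.1 (abs_real_inner_le_norm e (z - e))
    rw [he, one_mul] at h2
    linarith [h2.1]
  have hup : inner ℝ e (slAction d (wordProd A w)⁻¹ (y - u)) ≤ C * (1 / (2 * C ^ 2)) := by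
    refine (real_inner_le_norm _ _).trans ?_
    rw [he, one_mul]
    refine ((slAction d (wordProd A w)⁻¹).le_of_opNorm_le
      ((le_max_right _ _).trans (hCb w hw)) _).trans ?_
    gcongr
  have : inner ℝ e z ≤ C * (C * (1 / (2 * C ^ 2))) := by
    rw [hi]
    refine (mul_le_mul_of_nonneg_left hup (norm_nonneg _)).trans ?_
    gcongr
  have h3 : C * (C * (1 / (2 * C ^ 2))) = 1 / 2 := by field_simp
  linarith

/-- Quantitative irreducibility. -/
lemma StronglyProjectivelyAccessible.exists_uniform_lower_bound
    (hacc : StronglyProjectivelyAccessible A) :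
    ∃ N : ℕ, ∃ η : ℝ, 0 < η ∧ ∀ (u : EuclideanSpace ℝ (Fin d))
      (B : EuclideanSpace ℝ (Fin d) →L[ℝ] EuclideanSpace ℝ (Fin d)),
      ∃ w : List (Fin κ), w.length ≤ N ∧ η * (‖B‖ * ‖u‖) ≤ ‖B (wordAct A w u)‖ := by
  let X := sphere (0 : EuclideanSpace ℝ (Fin d)) 1 ×ˢ
    sphere (0 : EuclideanSpace ℝ (Fin d) →L[ℝ] EuclideanSpace ℝ (Fin d)) 1
  let U : ℕ → Set (EuclideanSpace ℝ (Fin d) ×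
      (EuclideanSpace ℝ (Fin d) →L[ℝ] EuclideanSpace ℝ (Fin d))) := fun n =>
    ⋃ w ∈ {w : List (Fin κ) | w.length ≤ n}, {p | 1 / ((n : ℝ) + 1) < ‖p.2 (wordAct A w p.1)‖}
  have hX : IsCompact X := (isCompact_sphere _ _).prod (isCompact_sphere _ _)
  have hUo : ∀ n, IsOpen (U n) := fun n => isOpen_biUnion fun w _ =>
    isOpen_lt continuous_const (by fun_prop)
  have hUm : Monotone U := fun m n hmn p hp => by
    simp only [U, Set.mem_iUnion, Set.mem_ofPred_eq, exists_prop] at hp ⊢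
    obtain ⟨w, hw, h⟩ := hp
    exact ⟨w, hw.trans hmn, (Nat.one_div_le_one_div hmn).trans_lt h⟩
  have hcov : X ⊆ ⋃ n, U n := by
    rintro ⟨u, B⟩ ⟨hu, hB⟩
    have hu1 : ‖u‖ = 1 := by simpa using hu
    have hB1 : ‖B‖ = 1 := by simpa using hB
    obtain ⟨w, hw⟩ := hacc.exists_apply_wordAct_ne_zero hu1
      (norm_ne_zero_iff.1 (by rw [hB1]; exact one_ne_zero) : B ≠ 0)
    obtain ⟨n, hn⟩ := exists_nat_one_div_lt (norm_pos_iff.2 hw)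
    simp only [U, Set.mem_iUnion, Set.mem_ofPred_eq, exists_prop]
    exact ⟨max n w.length, w, le_max_right _ _,
      (Nat.one_div_le_one_div (le_max_left _ _)).trans_lt hn⟩
  obtain ⟨N, hN⟩ := hX.elim_directed_cover U hUo hcov hUm.directed_le
  refine ⟨N, 1 / ((N : ℝ) + 1), by positivity, fun u B => ?_⟩
  rcases eq_or_ne u 0 with rfl | hu
  · exact ⟨[], by simp, by simp⟩
  rcases eq_or_ne B 0 with rfl | hB
  · exact ⟨[], by simp, by simp⟩
  have hu' := norm_pos_iff.2 hu
  have hB' := norm_pos_iff.2 hB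
  have hmem : (‖u‖⁻¹ • u, ‖B‖⁻¹ • B) ∈ X :=
    ⟨by simpa [norm_smul] using inv_mul_cancel₀ hu'.ne',
      by simpa [norm_smul] using inv_mul_cancel₀ hB'.ne'⟩
  obtain ⟨w, hw, h⟩ : ∃ w : List (Fin κ), w.length ≤ N ∧
      1 / ((N : ℝ) + 1) < ‖(‖B‖⁻¹ • B) (wordAct A w (‖u‖⁻¹ • u))‖ := by
    simpa only [U, Set.mem_iUnion, Set.mem_ofPred_eq, exists_prop] using hN hmem
  refine ⟨w, hw, ?_⟩
  rw [map_smul, map_smul, smul_apply, norm_smul, norm_smul, norm_inv, norm_inv,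
    norm_norm, norm_norm] at h
  have h4 : ‖u‖⁻¹ * (‖B‖⁻¹ * ‖B (wordAct A w u)‖) * (‖B‖ * ‖u‖) = ‖B (wordAct A w u)‖ := by
    field_simp
  rw [← h4]
  gcongr

end Accessibility

section Compactness

variable {d κ : ℕ} {A : Fin κ → Matrix.SpecialLinearGroup (Fin d) ℝ}

/-- If the semigroup generated by a family in `SL(d,ℝ)` is bounded, the generated group is
relatively compact. -/
lemma isCompact_closure_of_norm_wordAct_le {C : ℝ} (hC : ∀ w, ‖wordAct A w‖ ≤ C) :
    IsCompact (closure
      (((↑) : Matrix.SpecialLinearGroup (Fin d) ℝ → Matrix (Fin d) (Fin d) ℝ) ''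
        ((Subgroup.closure (Set.range A) : Subgroup (Matrix.SpecialLinearGroup (Fin d) ℝ)) :
          Set (Matrix.SpecialLinearGroup (Fin d) ℝ)))) := by
  set T : Set (Matrix (Fin d) (Fin d) ℝ) :=
    closure (Set.range fun w => (wordProd A w : Matrix (Fin d) (Fin d) ℝ))
  have hcont : Continuous (Matrix.toEuclideanCLM (𝕜 := ℝ) (n := Fin d)).symm :=
    LinearMap.continuous_of_finiteDimensional
      ((Matrix.toEuclideanCLM (𝕜 := ℝ) (n := Fin d)).symm.toAlgEquiv.toLinearMap)
  have hTc : IsCompact T := by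
    refine ((isCompact_closedBall (0 : EuclideanSpace ℝ (Fin d) →L[ℝ] EuclideanSpace ℝ (Fin d))
      C).image hcont).closure_of_subset ?_
    rintro _ ⟨w, rfl⟩
    exact ⟨wordAct A w, by simpa using hC w, by simp [wordAct, slAction]⟩
  have hTmul : ∀ x ∈ T, ∀ y ∈ T, x * y ∈ T := fun x hx y hy =>
    map_mem_closure₂ continuous_mul hx hy (by
      rintro _ ⟨w, rfl⟩ _ ⟨w', rfl⟩
      exact ⟨w' ++ w, by simp [wordProd_append]⟩)
  have hTdet : ∀ x ∈ T, x.det = 1 := fun x hx =>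
    (closure_minimal (by rintro _ ⟨w, rfl⟩; exact (wordProd A w).2)
      (isClosed_eq (Continuous.matrix_det continuous_id) continuous_const) : T ⊆ {x | x.det = 1}) hx
  have hsub : ∀ g ∈ Subgroup.closure (Set.range A), (g : Matrix (Fin d) (Fin d) ℝ) ∈ T := by
    intro g hg
    induction hg using Subgroup.closure_induction with
    | mem x hx =>
      obtain ⟨i, rfl⟩ := hx
      exact subset_closure ⟨[i], by simp [wordProd]⟩
    | one => exact subset_closure ⟨[], by simp [wordProd]⟩
    | mul x y _ _ hx hy =>
      rw [Matrix.SpecialLinearGroup.coe_mul]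
      exact hTmul _ hx _ hy
    | inv x _ hx =>
      obtain ⟨_, ⟨y, hy, rfl⟩, hidem⟩ := exists_idempotent_in_compact_subsemigroup
        (fun r => continuous_mul_const r)
        ((fun y => (x : Matrix (Fin d) (Fin d) ℝ) * y) '' T) ⟨_, _, hx, rfl⟩
        (hTc.image (continuous_const_mul _))
        (by
          rintro _ ⟨y, hy, rfl⟩ _ ⟨z, hz, rfl⟩
          exact ⟨y * (x * z), hTmul _ hy _ (hTmul _ hx _ hz), by simp only [mul_assoc]⟩)
      let z : Matrix.SpecialLinearGroup (Fin d) ℝ := ⟨y, hTdet y hy⟩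
      have hz : x * z * (x * z) = x * z := Subtype.ext hidem
      rw [inv_eq_of_mul_eq_one_right (mul_eq_left.1 hz)]
      exact hy
  refine hTc.closure_of_subset ?_
  rintro _ ⟨g, hg, rfl⟩
  exact hsub g hg

end Compactness

section Growth

variable {d κ : ℕ} [NeZero κ] {A : Fin κ → Matrix.SpecialLinearGroup (Fin d) ℝ}

/-- Every vector can be made to grow as fast as the maximal norm, up to a constant. -/
lemma StronglyProjectivelyAccessible.exists_word_growth (hacc : StronglyProjectivelyAccessible A) :
    ∃ N : ℕ, ∃ η : ℝ, 0 < η ∧ ∀ (u : EuclideanSpace ℝ (Fin d)) (n : ℕ),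
      ∃ w : List (Fin κ), n ≤ w.length ∧ w.length ≤ n + N ∧
        η * (maxNorm A n * ‖u‖) ≤ ‖wordAct A w u‖ := by
  obtain ⟨N, η, hη, h⟩ := hacc.exists_uniform_lower_bound
  refine ⟨N, η, hη, fun u n => ?_⟩
  obtain ⟨w, hw, hn⟩ := exists_norm_eq_maxNorm A n
  obtain ⟨w', hw', hb⟩ := h u (wordAct A w)
  refine ⟨w' ++ w, by simp [hw], by simp [hw]; lia, ?_⟩
  rwa [wordAct_append_apply, ← hn]

variable [NeZero d]

lemma StronglyProjectivelyAccessible.exists_le_maxNorm_add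
    (hacc : StronglyProjectivelyAccessible A) :
    ∃ c : ℝ, 0 < c ∧ c ≤ 1 ∧
      ∀ m n, c * (maxNorm A m * maxNorm A n) ≤ maxNorm A (m + n) := by
  obtain ⟨N, η, hη, h⟩ := hacc.exists_word_growth
  obtain ⟨C, hC, hCb⟩ := exists_bound_of_length_le (fun w : List (Fin κ) => maxNorm A w.length) N
  have hC0 : 0 < C := by linarith
  refine ⟨min 1 (η / C), by positivity, min_le_left _ _, fun m n => ?_⟩
  obtain ⟨w, hw, hm⟩ := exists_norm_eq_maxNorm A m
  have hn0 := maxNorm_pos A n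
  have hmn0 := maxNorm_pos A (m + n)
  have hle : ‖wordAct A w‖ ≤ C * maxNorm A (m + n) / (η * maxNorm A n) := by
    refine ContinuousLinearMap.opNorm_le_bound _ (by positivity) fun u => ?_
    obtain ⟨w', h1, h2, h3⟩ := h (wordAct A w u) n
    obtain ⟨j, hj⟩ := Nat.exists_eq_add_of_le h1
    have h4 : maxNorm A j ≤ C := by
      have := hCb (List.replicate j 0) (by rw [List.length_replicate]; lia)
      rwa [List.length_replicate] at this
    rw [← wordAct_append_apply] at h3
    have h5 := norm_wordAct_apply_le A (w ++ w') u
    rw [List.length_append, hw, hj, ← add_assoc] at h5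
    rw [div_mul_eq_mul_div, le_div_iff₀ (by positivity)]
    calc ‖wordAct A w u‖ * (η * maxNorm A n) = η * (maxNorm A n * ‖wordAct A w u‖) := by ring
      _ ≤ _ := h3
      _ ≤ _ := h5
      _ ≤ maxNorm A (m + n) * maxNorm A j * ‖u‖ := by gcongr; exact maxNorm_add_le A _ _
      _ ≤ maxNorm A (m + n) * C * ‖u‖ := by gcongr
      _ = _ := by ring
  rw [hm, le_div_iff₀ (by positivity)] at hle
  have hm0 := maxNorm_pos A m
  calc min 1 (η / C) * (maxNorm A m * maxNorm A n)
      ≤ η / C * (maxNorm A m * maxNorm A n) := by gcongr; exact min_le_right _ _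
    _ = maxNorm A m * (η * maxNorm A n) / C := by ring
    _ ≤ _ := by rw [div_le_iff₀ hC0]; linarith

/-- Unless the maximal norms stay bounded, every vector can be made to lag behind them. -/
lemma StronglyProjectivelyAccessible.exists_norm_wordAct_lt
    (hacc : StronglyProjectivelyAccessible A) (hunb : ∀ C, ∃ w, C < ‖wordAct A w‖)
    {τ : ℝ} (hτ : 0 < τ) {u : EuclideanSpace ℝ (Fin d)} (hu : ‖u‖ = 1) :
    ∃ w, ‖wordAct A w u‖ < τ * maxNorm A w.length := by
  by_contra! h
  obtain ⟨c, hc, -, hcm⟩ := hacc.exists_le_maxNorm_add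
  have key : ∀ w' x, ‖x‖ = 1 → τ * c * maxNorm A w'.length ≤ ‖wordAct A w' x‖ := by
    intro w' x hx
    set M := maxNorm A w'.length
    have hM : 0 < M := maxNorm_pos A _
    refine le_of_forall_pos_lt_add fun ε hε => ?_
    obtain ⟨K, hK⟩ := hacc.exists_word (ε := ε / (2 * M)) (by positivity)
    obtain ⟨w, -, z, hz, hzu, hy⟩ := hK u x hu hx _ (by positivity) le_rfl
    have hz0 : z ≠ 0 := norm_ne_zero_iff.1 (by simp [hz])
    have ha0 : 0 < ‖wordAct A w z‖ := norm_pos_iff.2 (wordAct_ne_zero A w hz0)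
    have hm : 0 < maxNorm A w.length := maxNorm_pos A _
    have h1 : τ * (c * (maxNorm A w.length * M)) ≤ ‖wordAct A w' (wordAct A w u)‖ := by
      rw [← wordAct_append_apply]
      refine le_trans ?_ (h _)
      rw [List.length_append]
      gcongr
      exact hcm _ _
    have h2 : ‖wordAct A w' (wordAct A w (z - u))‖ ≤ M * (maxNorm A w.length * ‖z - u‖) :=
      (norm_wordAct_apply_le A w' _).trans (by gcongr; exact norm_wordAct_apply_le A w _)
    have h3 : ‖wordAct A w z‖ ≤ maxNorm A w.length := by
      simpa [hz] using norm_wordAct_apply_le A w z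
    set y := ‖wordAct A w z‖⁻¹ • wordAct A w z with hydef
    have h4 : ‖wordAct A w' (wordAct A w z)‖ = ‖wordAct A w z‖ * ‖wordAct A w' y‖ := by
      rw [hydef, map_smul, norm_smul, norm_inv, norm_norm, mul_inv_cancel_left₀ ha0.ne']
    have h5 : ‖wordAct A w' y‖ ≤ ‖wordAct A w' x‖ + M * ‖y - x‖ := by
      have e : wordAct A w' y = wordAct A w' x + wordAct A w' (y - x) := by
        rw [map_sub]; abel
      rw [e]
      exact (norm_add_le _ _).trans (by gcongr; exact norm_wordAct_apply_le A w' _)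
    have h6 : ‖wordAct A w' (wordAct A w u)‖ ≤
        ‖wordAct A w' (wordAct A w z)‖ + ‖wordAct A w' (wordAct A w (z - u))‖ := by
      have e : wordAct A w' (wordAct A w u) =
          wordAct A w' (wordAct A w z) - wordAct A w' (wordAct A w (z - u)) := by
        simp only [map_sub]; abel
      rw [e]
      exact norm_sub_le _ _
    have h7 : maxNorm A w.length * (τ * c * M) ≤
        maxNorm A w.length * (‖wordAct A w' y‖ + M * ‖z - u‖) := by
      calc maxNorm A w.length * (τ * c * M) = τ * (c * (maxNorm A w.length * M)) := by ring
        _ ≤ ‖wordAct A w z‖ * ‖wordAct A w' y‖ + M * (maxNorm A w.length * ‖z - u‖) := by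
          rw [← h4]; linarith
        _ ≤ maxNorm A w.length * ‖wordAct A w' y‖ + M * (maxNorm A w.length * ‖z - u‖) := by
          gcongr
        _ = _ := by ring
    have h8 := le_of_mul_le_mul_left h7 hm
    rw [lt_div_iff₀ (by positivity)] at hzu hy
    nlinarith
  obtain ⟨w, hw⟩ := hunb (1 / (τ * c))
  rw [div_lt_iff₀ (by positivity)] at hw
  have h1 := le_one_of_forall_le_norm_slAction (wordProd A w) (key w)
  have h2 := norm_wordAct_le A w
  nlinarith [mul_pos hτ hc]

lemma StronglyProjectivelyAccessible.exists_word_lag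
    (hacc : StronglyProjectivelyAccessible A) (hunb : ∀ C, ∃ w, C < ‖wordAct A w‖)
    {τ : ℝ} (hτ : 0 < τ) :
    ∃ N : ℕ, ∀ u : EuclideanSpace ℝ (Fin d), u ≠ 0 → ∃ w : List (Fin κ), w.length ≤ N ∧
      ‖wordAct A w u‖ < τ * maxNorm A w.length * ‖u‖ := by
  let U : ℕ → Set (EuclideanSpace ℝ (Fin d)) := fun n =>
    ⋃ w ∈ {w : List (Fin κ) | w.length ≤ n}, {u | ‖wordAct A w u‖ < τ * maxNorm A w.length}
  have hUo : ∀ n, IsOpen (U n) := fun n => isOpen_biUnion fun w _ =>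
    isOpen_lt (by fun_prop) continuous_const
  have hUm : Monotone U := fun m n hmn p hp => by
    simp only [U, Set.mem_iUnion, Set.mem_ofPred_eq, exists_prop] at hp ⊢
    obtain ⟨w, hw, h⟩ := hp
    exact ⟨w, hw.trans hmn, h⟩
  have hcov : sphere (0 : EuclideanSpace ℝ (Fin d)) 1 ⊆ ⋃ n, U n := by
    intro u hu
    obtain ⟨w, hw⟩ := hacc.exists_norm_wordAct_lt hunb hτ (by simpa using hu)
    simp only [U, Set.mem_iUnion, Set.mem_ofPred_eq, exists_prop]
    exact ⟨w.length, w, le_rfl, hw⟩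
  obtain ⟨N, hN⟩ := (isCompact_sphere _ _).elim_directed_cover U hUo hcov hUm.directed_le
  refine ⟨N, fun u hu => ?_⟩
  have hu' := norm_pos_iff.2 hu
  have hmem : ‖u‖⁻¹ • u ∈ sphere (0 : EuclideanSpace ℝ (Fin d)) 1 := by
    simpa [norm_smul] using inv_mul_cancel₀ hu'.ne'
  obtain ⟨w, hw, h⟩ : ∃ w : List (Fin κ), w.length ≤ N ∧
      ‖wordAct A w (‖u‖⁻¹ • u)‖ < τ * maxNorm A w.length := by
    simpa only [U, Set.mem_iUnion, Set.mem_ofPred_eq, exists_prop] using hN hmem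
  refine ⟨w, hw, ?_⟩
  rwa [map_smul, norm_smul, norm_inv, norm_norm, inv_mul_lt_iff₀ hu', mul_comm ‖u‖] at h

lemma maxNorm_zero : maxNorm A 0 = 1 := by
  obtain ⟨w, hw, h⟩ := exists_norm_eq_maxNorm A 0
  rw [← h, List.eq_nil_of_length_eq_zero hw, wordAct_nil, norm_one]

/-- Every vector can be made to lag exponentially behind the maximal norms. -/
lemma StronglyProjectivelyAccessible.exists_word_exponential_lag
    (hacc : StronglyProjectivelyAccessible A) (hunb : ∀ C, ∃ w, C < ‖wordAct A w‖) :
    ∃ N : ℕ, ∀ (l : ℕ) (u : EuclideanSpace ℝ (Fin d)), u ≠ 0 →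
      ∃ w : List (Fin κ), l ≤ w.length ∧ w.length ≤ l * N ∧
        ‖wordAct A w u‖ ≤ (1 / 2) ^ l * maxNorm A w.length * ‖u‖ := by
  obtain ⟨c, hc, hc1, hcm⟩ := hacc.exists_le_maxNorm_add
  obtain ⟨N, hN⟩ := hacc.exists_word_lag hunb (τ := c / 2) (by positivity)
  refine ⟨N, fun l => ?_⟩
  induction l with
  | zero => exact fun u _ => ⟨[], by simp, by simp, by simp [wordAct_nil, maxNorm_zero]⟩
  | succ l ih =>
    intro u hu
    obtain ⟨w₀, hw₀, h₀⟩ := hN u hu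
    have hpos : 0 < w₀.length := by
      rw [List.length_pos_iff]
      rintro rfl
      rw [wordAct_nil, List.length_nil, maxNorm_zero] at h₀
      have := norm_pos_iff.2 hu
      simp only [one_apply_eq_self] at h₀
      nlinarith
    obtain ⟨w, hw₁, hw₂, h⟩ := ih _ (wordAct_ne_zero A w₀ hu)
    refine ⟨w₀ ++ w, by rw [List.length_append]; lia, by rw [List.length_append]; lia, ?_⟩
    have hm := maxNorm_pos A w.length
    rw [wordAct_append_apply, List.length_append]
    calc _ ≤ _ := h
      _ ≤ (1 / 2) ^ l * maxNorm A w.length * (c / 2 * maxNorm A w₀.length * ‖u‖) := by gcongr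
      _ = (1 / 2) ^ (l + 1) * (c * (maxNorm A w₀.length * maxNorm A w.length)) * ‖u‖ := by ring
      _ ≤ _ := by gcongr; exact hcm _ _

variable (A) in
lemma subadditive_log_maxNorm : Subadditive fun n => Real.log (maxNorm A n) := fun m n => by
  have hm := maxNorm_pos A m
  have hn := maxNorm_pos A n
  rw [← Real.log_mul hm.ne' hn.ne']
  exact Real.log_le_log (maxNorm_pos A _) (maxNorm_add_le A m n)

variable (A) in
lemma bddBelow_log_maxNorm : BddBelow (Set.range fun n : ℕ => Real.log (maxNorm A n) / n) :=
  ⟨0, by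
    rintro _ ⟨n, rfl⟩
    exact div_nonneg (Real.log_nonneg (one_le_maxNorm A n)) n.cast_nonneg⟩

lemma StronglyProjectivelyAccessible.exists_extension_fast
    (hacc : StronglyProjectivelyAccessible A) {a : ℝ} (ha : a < (subadditive_log_maxNorm A).lim)
    {v : EuclideanSpace ℝ (Fin d)} (hv : v ≠ 0) (k : ℕ) (p : List (Fin κ)) :
    ∃ w, k ≤ (p ++ w).length ∧ a * (p ++ w).length < Real.log ‖wordAct A (p ++ w) v‖ := by
  obtain ⟨N, η, hη, h⟩ := hacc.exists_word_growth
  set s := (subadditive_log_maxNorm A).lim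
  have hu := wordAct_ne_zero A p hv
  set u := wordAct A p v
  have hu0 := norm_pos_iff.2 hu
  set D := Real.log η + Real.log ‖u‖
  obtain ⟨n₀, hn₀⟩ := exists_nat_gt ((|a| * (p.length + N) - D) / (s - a))
  rw [div_lt_iff₀ (sub_pos.2 ha)] at hn₀
  set n := max n₀ (max k 1)
  have hn₀n : (n₀ : ℝ) ≤ n := by exact_mod_cast le_max_left _ _
  have hn1 : 1 ≤ n := (le_max_right _ _).trans (le_max_right _ _)
  have hkn : k ≤ n := (le_max_left _ _).trans (le_max_right _ _)
  obtain ⟨w, h1, h2, h3⟩ := h u n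
  have hm := maxNorm_pos A n
  refine ⟨w, by rw [List.length_append]; lia, ?_⟩
  rw [wordAct_append_apply, List.length_append]
  have h4 := Real.log_le_log (by positivity) h3
  rw [Real.log_mul hη.ne' (by positivity), Real.log_mul hm.ne' hu0.ne'] at h4
  have h5 := (subadditive_log_maxNorm A).lim_le_div (bddBelow_log_maxNorm A)
    (Nat.one_le_iff_ne_zero.1 hn1)
  rw [le_div_iff₀ (by exact_mod_cast hn1)] at h5
  obtain ⟨j, hj⟩ := Nat.exists_eq_add_of_le h1
  have hjN : (j : ℝ) ≤ N := by exact_mod_cast (by lia : j ≤ N)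
  have h6 : a * (p.length + j) ≤ |a| * (p.length + N) := by
    have := le_abs_self a
    gcongr
  have h7 : (s - a) * n₀ ≤ (s - a) * n := by
    have := sub_pos.2 ha
    gcongr
  rw [hj]
  push_cast
  linarith

lemma StronglyProjectivelyAccessible.exists_extension_slow
    (hacc : StronglyProjectivelyAccessible A) (hunb : ∀ C, ∃ w, C < ‖wordAct A w‖) :
    ∃ b < (subadditive_log_maxNorm A).lim, ∀ {v : EuclideanSpace ℝ (Fin d)}, v ≠ 0 →
      ∀ (k : ℕ) (p : List (Fin κ)),
      ∃ w, k ≤ (p ++ w).length ∧ Real.log ‖wordAct A (p ++ w) v‖ < b * (p ++ w).length := by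
  obtain ⟨N, hN⟩ := hacc.exists_word_exponential_lag hunb
  set s := (subadditive_log_maxNorm A).lim
  have hlog2 : 0 < Real.log 2 := Real.log_pos one_lt_two
  set c := Real.log 2 / (N + 1) with hcdef
  have hc : 0 < c := by positivity
  refine ⟨s - c / 2, by linarith, fun {v} hv k p => ?_⟩
  have hev : ∀ᶠ n : ℕ in atTop, Real.log (maxNorm A n) / n < s + c / 4 :=
    ((subadditive_log_maxNorm A).tendsto_lim (bddBelow_log_maxNorm A)).eventually
      (gt_mem_nhds (by linarith))
  obtain ⟨n₀, hn₀⟩ := eventually_atTop.1 hev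
  have hu := wordAct_ne_zero A p hv
  set u := wordAct A p v
  have hu0 := norm_pos_iff.2 hu
  obtain ⟨n₁, hn₁⟩ := exists_nat_gt ((Real.log ‖u‖ + |s - c / 2| * p.length) / (c / 4))
  rw [div_lt_iff₀ (by positivity)] at hn₁
  obtain ⟨w, h1, h2, h3⟩ := hN (max (max n₀ n₁) (max k 1)) u hu
  set l := max (max n₀ n₁) (max k 1)
  have hl0 : n₀ ≤ l := (le_max_left _ _).trans (le_max_left _ _)
  have hl1 : n₁ ≤ l := (le_max_right _ _).trans (le_max_left _ _)
  have hlk : k ≤ l := (le_max_left _ _).trans (le_max_right _ _)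
  have hl : 1 ≤ l := (le_max_right _ _).trans (le_max_right _ _)
  refine ⟨w, by rw [List.length_append]; lia, ?_⟩
  rw [wordAct_append_apply, List.length_append]
  set n := w.length
  have hm := maxNorm_pos A n
  have h4 := Real.log_le_log (norm_pos_iff.2 (wordAct_ne_zero A w hu)) h3
  rw [Real.log_mul (by positivity) hu0.ne', Real.log_mul (by positivity) hm.ne', Real.log_pow,
    one_div, Real.log_inv] at h4
  have h5 := hn₀ n (hl0.trans h1)
  have hnpos : (0 : ℝ) < n := by exact_mod_cast (by lia : 0 < n)
  rw [div_lt_iff₀ hnpos] at h5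
  have h6 : c * n ≤ l * Real.log 2 := by
    rw [hcdef, div_mul_eq_mul_div, div_le_iff₀ (by positivity)]
    have : (n : ℝ) ≤ l * N := by exact_mod_cast h2
    have hl' : (0 : ℝ) ≤ l := l.cast_nonneg
    nlinarith
  have h7 : (n₁ : ℝ) * (c / 4) ≤ n * (c / 4) := by
    have : (n₁ : ℝ) ≤ n := by exact_mod_cast hl1.trans h1
    gcongr
  have h8 : -(s - c / 2) * p.length ≤ |s - c / 2| * p.length := by
    have := neg_le_abs (s - c / 2)
    gcongr
  push_cast
  linarith

end Growth

section Residual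

variable {κ : ℕ}

/-- A property of finite words that can be reached from every finite word holds for some prefix
of a generic sequence. -/
lemma residual_of_forall_exists_append (Q : List (Fin κ) → Prop)
    (hQ : ∀ p, ∃ w, Q (p ++ w)) :
    {ω : ℤ → Fin κ | ∃ n, Q (firstLetters ω n)} ∈ residual (ℤ → Fin κ) := by
  refine residual_of_dense_open ?_ ?_
  · have hset : {ω : ℤ → Fin κ | ∃ n, Q (firstLetters ω n)} =
        ⋃ n : ℕ, (fun (ω : ℤ → Fin κ) (i : Fin n) => ω (i : ℕ)) ⁻¹' {f | Q (List.ofFn f)} := by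
      ext ω
      simp [firstLetters]
    rw [hset]
    exact isOpen_iUnion fun n => (isOpen_discrete _).preimage (by fun_prop)
  · refine dense_iff_inter_open.2 fun U hU ⟨ω₀, hω₀⟩ => ?_
    obtain ⟨I, u, hu, hsub⟩ := isOpen_pi_iff.1 hU ω₀ hω₀
    obtain ⟨m, hm⟩ : ∃ m : ℕ, ∀ i ∈ I, i < m := by
      obtain ⟨b, hb⟩ := I.bddAbove
      exact ⟨(b + 1).toNat, fun i hi => by have := hb hi; lia⟩
    obtain ⟨w, hw⟩ := hQ (firstLetters ω₀ m)
    let ω : ℤ → Fin κ := fun i => if i < m then ω₀ i else w.getD (i - m).toNat (ω₀ 0)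
    refine ⟨ω, hsub fun i hi => ?_, m + w.length, ?_⟩
    · have : ω i = ω₀ i := if_pos (hm i hi)
      exact this ▸ (hu i hi).2
    · convert hw using 1
      refine List.ext_getElem (by simp [length_firstLetters]) fun i h1 h2 => ?_
      rw [List.getElem_append]
      by_cases him : i < m
      · simp [firstLetters, ω, him]
      · have hlt : i - m < w.length := by
          rw [length_firstLetters] at h1
          lia
        simp [firstLetters, ω, him, List.getD_eq_getElem?_getD, hlt]

end Residual

lemma exists_abs_growth_le {d κ : ℕ} (A : Fin κ → Matrix.SpecialLinearGroup (Fin d) ℝ)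
    {v : EuclideanSpace ℝ (Fin d)} (hv : v ≠ 0) (ω : ℤ → Fin κ) :
    ∃ C, ∀ n : ℕ, |(n : ℝ)⁻¹ * Real.log ‖wordAct A (firstLetters ω n) v‖| ≤ C := by
  obtain ⟨L, hL, h⟩ := exists_pow_bounds A
  refine ⟨Real.log L + |Real.log ‖v‖|, fun n => ?_⟩
  have hlogL := Real.log_nonneg hL
  rcases Nat.eq_zero_or_pos n with rfl | hn
  · simpa using by positivity
  have hn1 : (1 : ℝ) ≤ n := by exact_mod_cast hn
  have hv0 := norm_pos_iff.2 hv
  have hw0 := norm_pos_iff.2 (wordAct_ne_zero A (firstLetters ω n) hv)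
  obtain ⟨h1, h2⟩ := h (firstLetters ω n) v
  rw [length_firstLetters] at h1 h2
  have hLn : L ^ n ≠ 0 := (pow_pos (by linarith) n).ne'
  have h3 := Real.log_le_log hw0 h1
  have h4 := Real.log_le_log hv0 h2
  rw [Real.log_mul hLn hv0.ne', Real.log_pow] at h3
  rw [Real.log_mul hLn hw0.ne', Real.log_pow] at h4
  rw [abs_mul, abs_inv, Nat.abs_cast, inv_mul_le_iff₀ (by linarith)]
  have h5 : |Real.log ‖v‖| ≤ n * |Real.log ‖v‖| := le_mul_of_one_le_left (abs_nonneg _) hn1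
  have h6 := abs_le.1 (le_refl |Real.log ‖v‖|)
  exact abs_le.2 ⟨by linarith, by linarith⟩

/-- **Lyapunov non-typical behaviour along every direction.**
If the subgroup of `SL(d,ℝ)` generated by `A₁, …, A_κ` has non-compact closure and the
family is strongly projectively accessible, then for every nonzero vector `v ∈ ℝ^d` there
is a residual subset `𝓡_v` of the shift space `Σ_κ = {1,…,κ}^ℤ` along which the
exponential growth rate of `‖A⁽ⁿ⁾(ω) v‖` does not exist: the liminf of
`(1/n) log ‖A⁽ⁿ⁾(ω) v‖` is strictly smaller than its limsup. -/
theorem lyapunov_irregular_directions (d κ : ℕ) (hd : 2 ≤ d) (hκ : 1 ≤ κ)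
    (A : Fin κ → Matrix.SpecialLinearGroup (Fin d) ℝ)
    (hnc : ¬ IsCompact (closure
      (((↑) : Matrix.SpecialLinearGroup (Fin d) ℝ → Matrix (Fin d) (Fin d) ℝ) ''
        ((Subgroup.closure (Set.range A) : Subgroup (Matrix.SpecialLinearGroup (Fin d) ℝ)) :
          Set (Matrix.SpecialLinearGroup (Fin d) ℝ)))))
    (hacc : StronglyProjectivelyAccessible A) :
    ∀ v : EuclideanSpace ℝ (Fin d), v ≠ 0 →
      ∃ R : Set (ℤ → Fin κ), R ∈ residual (ℤ → Fin κ) ∧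
        ∀ ω ∈ R,
          liminf (fun n : ℕ =>
              (n : ℝ)⁻¹ * Real.log ‖mvec (cocycleProd A ω n : Matrix (Fin d) (Fin d) ℝ) v‖)
            atTop <
          limsup (fun n : ℕ =>
              (n : ℝ)⁻¹ * Real.log ‖mvec (cocycleProd A ω n : Matrix (Fin d) (Fin d) ℝ) v‖)
            atTop := by
  have : NeZero d := ⟨by lia⟩
  have : NeZero κ := ⟨by lia⟩
  have hunb : ∀ C, ∃ w, C < ‖wordAct A w‖ := by
    by_contra! h
    obtain ⟨C, hC⟩ := h
    exact hnc (isCompact_closure_of_norm_wordAct_le hC)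
  obtain ⟨b, hb, hslow⟩ := hacc.exists_extension_slow hunb
  obtain ⟨a, hba, ha⟩ := exists_between hb
  intro v hv
  refine ⟨(⋂ k : ℕ, {ω | ∃ n, k ≤ (firstLetters ω n).length ∧
        a * (firstLetters ω n).length < Real.log ‖wordAct A (firstLetters ω n) v‖}) ∩
      ⋂ k : ℕ, {ω | ∃ n, k ≤ (firstLetters ω n).length ∧
        Real.log ‖wordAct A (firstLetters ω n) v‖ < b * (firstLetters ω n).length}, ?_, ?_⟩
  · refine inter_mem (countable_iInter_mem.2 fun k => ?_) (countable_iInter_mem.2 fun k => ?_)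
    · exact residual_of_forall_exists_append
        (fun p => k ≤ p.length ∧ a * p.length < Real.log ‖wordAct A p v‖)
        (hacc.exists_extension_fast ha hv k)
    · exact residual_of_forall_exists_append
        (fun p => k ≤ p.length ∧ Real.log ‖wordAct A p v‖ < b * p.length) (hslow hv k)
  rintro ω ⟨hfast, hslow⟩
  simp only [Set.mem_iInter, Set.mem_ofPred_eq, length_firstLetters] at hfast hslow
  simp only [mvec_eq_slAction, cocycleProd_eq_wordProd]
  change liminf (fun n : ℕ => (n : ℝ)⁻¹ * Real.log ‖wordAct A (firstLetters ω n) v‖) atTop <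
    limsup (fun n : ℕ => (n : ℝ)⁻¹ * Real.log ‖wordAct A (firstLetters ω n) v‖) atTop
  obtain ⟨C, hC⟩ := exists_abs_growth_le A hv ω
  have hle : liminf (fun n : ℕ => (n : ℝ)⁻¹ * Real.log ‖wordAct A (firstLetters ω n) v‖) atTop
      ≤ b := by
    refine liminf_le_of_frequently_le (frequently_atTop.2 fun k => ?_)
      (isBoundedUnder_of ⟨-C, fun n => (abs_le.1 (hC n)).1⟩)
    obtain ⟨n, hn, h⟩ := hslow (k + 1)
    refine ⟨n, by lia, ?_⟩
    rw [inv_mul_le_iff₀ (by exact_mod_cast (by lia : 0 < n)), mul_comm]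
    exact h.le
  have hge : a ≤ limsup (fun n : ℕ =>
      (n : ℝ)⁻¹ * Real.log ‖wordAct A (firstLetters ω n) v‖) atTop := by
    refine le_limsup_of_frequently_le (frequently_atTop.2 fun k => ?_)
      (isBoundedUnder_of ⟨C, fun n => (abs_le.1 (hC n)).2⟩)
    obtain ⟨n, hn, h⟩ := hfast (k + 1)
    refine ⟨n, by lia, ?_⟩
    rw [le_inv_mul_iff₀ (by exact_mod_cast (by lia : 0 < n)), mul_comm]
    exact h.le
  exact hle.trans_lt (hba.trans_le hge)

end
end

section
/- Let (X,d) be a compact metric space, κ ≥ 1, and let f₁,…,f_κ : X → X be bijections such that every f_i and every f_i⁻¹ is Lipschitz continuous. Let ψ : X → ℝ be continuous. Assume: (a) the semigroup action generated by f₁,…,f_κ has frequent hitting times; (b) there exists 1 ≤ i ≤ κ such that ψ is not a coboundary with respect to f_i. Then the set 𝓡_Σ of all ω ∈ Σ_κ such that {x ∈ X : the sequence ((1/n) ∑_{j=0}^{n−1} ψ(f_ω^j(x)))_{n≥1} does not converge} is a residual subset of X, is itself a residual subset of Σ_κ. In particular, the set I_S(ψ) = {x ∈ X : there exists ω ∈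 Σ_κ such that the sequence ((1/n) ∑_{j=0}^{n−1} ψ(f_ω^j(x)))_{n≥1} does not converge} is a residual subset of X. -/
open Filter Topology Metric MeasureTheory

noncomputable section

/-- Composition `f_{ω_{p-1}} ∘ ⋯ ∘ f_{ω₀}` along a finite word `w = (ω₀, …, ω_{p-1})`. -/
def wordComp {X : Type*} {κ : ℕ} (f : Fin κ → X → X) (w : List (Fin κ)) (x : X) : X :=
  w.foldl (fun y i => f i y) x

/-- Composition `f_ω^n = f_{ω_{n-1}} ∘ ⋯ ∘ f_{ω₀}` along an infinite word `ω ∈ {1,…,κ}^ℕ`. -/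
def seqComp {X : Type*} {κ : ℕ} (f : Fin κ → X → X) (ω : ℕ → Fin κ) : ℕ → X → X
  | 0 => id
  | n + 1 => f (ω n) ∘ seqComp f ω n

/-- The semigroup action generated by `f₁, …, f_κ` has *frequent hitting times*:
for every `ε > 0` there is `K(ε)` such that for all `x₁, x₂ ∈ X` and every radius
`0 < r ≤ ε/2` there are `p ≤ K(ε)`, a word `w` of length `p` and a point `z` with
`B(z, r/2) ⊆ f_w^p(B(x₁,ε)) ∩ B(x₂,r)`. -/
def FrequentHittingTimes {X : Type*} [MetricSpace X] {κ : ℕ} (f : Fin κ → X → X) : Prop :=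
  ∀ ε : ℝ, 0 < ε → ∃ K : ℕ, ∀ x₁ x₂ : X, ∀ r : ℝ, 0 < r → r ≤ ε / 2 →
    ∃ p ≤ K, ∃ w : List (Fin κ), w.length = p ∧ ∃ z : X,
      Metric.ball z (r / 2) ⊆ wordComp f w '' Metric.ball x₁ ε ∩ Metric.ball x₂ r

/-- `ψ` is not a coboundary with respect to `f`: there are two `f`-invariant Borel
probability measures giving `ψ` different space averages. -/
def NotCoboundary {X : Type*} [MeasurableSpace X] (f : X → X) (ψ : X → ℝ) : Prop :=
  ∃ μ₁ μ₂ : Measure X, IsProbabilityMeasure μ₁ ∧ IsProbabilityMeasure μ₂ ∧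
    μ₁.map f = μ₁ ∧ μ₂.map f = μ₂ ∧ ∫ x, ψ x ∂μ₁ < ∫ x, ψ x ∂μ₂

section SequentialDynamics

variable {X : Type*} {κ : ℕ}

theorem wordComp_append (f : Fin κ → X → X) (u w : List (Fin κ)) (x : X) :
    wordComp f (u ++ w) x = wordComp f w (wordComp f u x) := by
  simp [wordComp, List.foldl_append]

theorem seqComp_eq_wordComp (f : Fin κ → X → X) (ω : ℕ → Fin κ) (n : ℕ) (x : X) :
    seqComp f ω n x = wordComp f ((List.range n).map ω) x := by
  induction n with
  | zero => rfl
  | succ n ih =>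
    rw [List.range_succ, List.map_append, wordComp_append, ← ih]
    rfl

/-- Along the infinite word `w i i i ⋯`, the orbit first follows `w` and then iterates `f i`. -/
theorem seqComp_getD_length_add (f : Fin κ → X → X) (w : List (Fin κ)) (i : Fin κ) (n : ℕ)
    (x : X) :
    seqComp f (fun k => w.getD k i) (w.length + n) x = (f i)^[n] (wordComp f w x) := by
  induction n with
  | zero =>
    have hw : (List.range w.length).map (fun k => w.getD k i) = w :=
      List.ext_getElem (by simp) (by intro k h₁ h₂; simp [h₂])
    rw [Nat.add_zero, seqComp_eq_wordComp, hw]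
    rfl
  | succ n ih =>
    rw [Function.iterate_succ_apply', ← ih, ← Nat.add_assoc]
    simp [seqComp]

theorem isOpenMap_wordComp [TopologicalSpace X] {f : Fin κ → X → X} (hf : ∀ i, IsOpenMap (f i))
    (w : List (Fin κ)) : IsOpenMap (wordComp f w) := by
  induction w with
  | nil => exact IsOpenMap.id
  | cons i w ih => exact ih.comp (hf i)

theorem continuous_seqComp [TopologicalSpace X] {f : Fin κ → X → X} (hf : ∀ i, Continuous (f i))
    (n : ℕ) : Continuous fun q : (ℕ → Fin κ) × X => seqComp f q.1 n q.2 := by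
  induction n with
  | zero => exact continuous_snd
  | succ n ih =>
    have h : Continuous fun q : Fin κ × X => f q.1 q.2 := continuous_prod_of_discrete_left.2 hf
    exact h.comp (((continuous_apply n).comp continuous_fst).prodMk ih)

/-- An open set of sequences contains a cylinder around each of its points. -/
theorem exists_cylinder_subset {A : Set (ℕ → Fin κ)} (hA : IsOpen A) {ω : ℕ → Fin κ}
    (hω : ω ∈ A) : ∃ m, ∀ ω' : ℕ → Fin κ, (∀ k < m, ω' k = ω k) → ω' ∈ A := by
  obtain ⟨I, u, hu, hI⟩ := isOpen_pi_iff.1 hA ω hω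
  refine ⟨I.sup id + 1, fun ω' h => hI fun k hk => ?_⟩
  rw [h k (Nat.lt_succ_of_le (Finset.le_sup (f := id) hk))]
  exact (hu k hk).2

/-- The Birkhoff average of `ψ` over the first `n` points of the orbit of `x` along `ω`. -/
def birkhoffAlong (f : Fin κ → X → X) (ψ : X → ℝ) (ω : ℕ → Fin κ) (n : ℕ) (x : X) : ℝ :=
  (n : ℝ)⁻¹ * ∑ j ∈ Finset.range n, ψ (seqComp f ω j x)

theorem birkhoffAlong_neg (f : Fin κ → X → X) (ψ : X → ℝ) (ω : ℕ → Fin κ) (n : ℕ) (x : X) :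
    birkhoffAlong f (-ψ) ω n x = -birkhoffAlong f ψ ω n x := by
  simp [birkhoffAlong]

/-- The pairs `(ω, x)` having a Birkhoff average below `c` at some time at least `N`. -/
def lowAverageSet (f : Fin κ → X → X) (ψ : X → ℝ) (c : ℝ) (N : ℕ) : Set ((ℕ → Fin κ) × X) :=
  {q | ∃ n ≥ N, birkhoffAlong f ψ q.1 n q.2 < c}

theorem isOpen_lowAverageSet [TopologicalSpace X] {f : Fin κ → X → X}
    (hf : ∀ i, Continuous (f i)) {ψ : X → ℝ} (hψ : Continuous ψ) (c : ℝ) (N : ℕ) :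
    IsOpen (lowAverageSet f ψ c N) := by
  have h : lowAverageSet f ψ c N =
      ⋃ n ≥ N, {q : (ℕ → Fin κ) × X | birkhoffAlong f ψ q.1 n q.2 < c} := by
    ext q
    simp [lowAverageSet]
  rw [h]
  refine isOpen_biUnion fun n _ => isOpen_lt ?_ continuous_const
  exact continuous_const.mul
    (continuous_finsetSum _ fun j _ => hψ.comp (continuous_seqComp hf j))

end SequentialDynamics

/-- For an invariant probability measure, some point has its `n`-th Birkhoff sum at most
`n` times the space average. -/
theorem exists_birkhoffSum_le_mul_integral {X : Type*} [TopologicalSpace X] [CompactSpace X]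
    [MeasurableSpace X] [BorelSpace X] {g : X → X} (hg : Continuous g) {ψ : X → ℝ}
    (hψ : Continuous ψ) {μ : Measure X} [IsProbabilityMeasure μ] (hμ : μ.map g = μ) (n : ℕ) :
    ∃ x, ∑ j ∈ Finset.range n, ψ (g^[j] x) ≤ n * ∫ y, ψ y ∂μ := by
  have hmp : MeasurePreserving g μ μ := ⟨hg.measurable, hμ⟩
  have hint : ∀ φ : X → ℝ, Continuous φ → Integrable φ μ := fun φ hφ =>
    hφ.integrable_of_hasCompactSupport (HasCompactSupport.of_compactSpace φ)
  have hc : ∀ j : ℕ, Continuous fun x => ψ (g^[j] x) := fun j => hψ.comp (hg.iterate j)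
  have hj : ∀ j : ℕ, ∫ x, ψ (g^[j] x) ∂μ = ∫ y, ψ y ∂μ := fun j => by
    have hm := hmp.iterate j
    conv_rhs => rw [← hm.map_eq]
    exact (integral_map hm.measurable.aemeasurable
      hψ.measurable.aestronglyMeasurable).symm
  obtain ⟨x, hx⟩ := exists_le_integral (μ := μ)
    (hint _ (continuous_finsetSum (Finset.range n) fun j _ => hc j))
  refine ⟨x, hx.trans_eq ?_⟩
  rw [integral_finsetSum _ fun j _ => hint _ (hc j)]
  simp [hj]

theorem dense_lowAverageSet {X : Type*} [MetricSpace X] [CompactSpace X]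
    [MeasurableSpace X] [BorelSpace X] {κ : ℕ} {f : Fin κ → X → X}
    (hf : ∀ i, Continuous (f i)) (hfo : ∀ i, IsOpenMap (f i)) {ψ : X → ℝ} (hψ : Continuous ψ)
    (hfht : FrequentHittingTimes f) {i : Fin κ} {μ : Measure X} [IsProbabilityMeasure μ]
    (hμ : μ.map (f i) = μ) {c : ℝ} (hc : ∫ x, ψ x ∂μ < c) (N : ℕ) :
    Dense (lowAverageSet f ψ c N) := by
  rw [dense_iff_inter_open]
  rintro O hO ⟨⟨ω, x⟩, hωx⟩
  obtain ⟨A, V, hA, hV, hωA, hxV, hAV⟩ := isOpen_prod_iff.1 hO ω x hωx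
  obtain ⟨m, hm⟩ := exists_cylinder_subset hA hωA
  set u := (List.range m).map ω with hu
  obtain ⟨ε, hε, hball⟩ := Metric.isOpen_iff.1 (isOpenMap_wordComp hfo u V hV)
    (wordComp f u x) ⟨x, hxV, rfl⟩
  obtain ⟨K, hK⟩ := hfht ε hε
  obtain ⟨C, hC⟩ := isCompact_univ.exists_bound_of_continuousOn hψ.continuousOn
  obtain ⟨a, ha, hac⟩ := exists_between hc
  obtain ⟨n₀, hn₀⟩ := exists_nat_gt (((m + K : ℕ) : ℝ) * (|C| + |c|) / (c - a))
  set n := max n₀ (N + 1)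
  have hn_pos : (0 : ℝ) < n := by exact_mod_cast lt_of_lt_of_le N.succ_pos (le_max_right _ _)
  have hn : ((m + K : ℕ) : ℝ) * (|C| + |c|) < n * (c - a) := by
    rw [← div_lt_iff₀ (sub_pos.2 hac)]
    exact hn₀.trans_le (by exact_mod_cast le_max_left _ _)
  obtain ⟨x₂, hx₂⟩ := exists_birkhoffSum_le_mul_integral (hf i) hψ hμ n
  have hopen : IsOpen {z | ∑ j ∈ Finset.range n, ψ ((f i)^[j] z) < n * a} :=
    isOpen_lt (continuous_finsetSum _ fun j _ => hψ.comp ((hf i).iterate j)) continuous_const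
  obtain ⟨r, hr, hrsub⟩ := Metric.isOpen_iff.1 hopen x₂
    (hx₂.trans_lt (mul_lt_mul_of_pos_left ha hn_pos))
  have hr' : 0 < min r (ε / 2) := lt_min hr (half_pos hε)
  obtain ⟨p, hp, w, hw, z, hz⟩ := hK (wordComp f u x) x₂ _ hr' (min_le_right _ _)
  obtain ⟨⟨y', hy', hy'z⟩, hz₂⟩ := hz (Metric.mem_ball_self (half_pos hr'))
  obtain ⟨y, hyV, rfl⟩ := hball hy'
  have hzsum := hrsub (Metric.ball_subset_ball (min_le_left _ _) hz₂)
  have hlen : (u ++ w).length = m + p := by simp [hu, hw]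
  refine ⟨(fun k => (u ++ w).getD k i, y), hAV ⟨hm _ fun k hk => ?_, hyV⟩,
    (u ++ w).length + n, ?_, ?_⟩
  · have hku : k < u.length := by simpa [hu] using hk
    simp only [List.getD_append _ _ _ _ hku]
    simp [hu, hk]
  · exact (Nat.le_succ N).trans ((le_max_right _ _).trans (Nat.le_add_left _ _))
  · set M := (u ++ w).length
    have hMK : (M : ℝ) ≤ (m + K : ℕ) := by
      exact_mod_cast hlen.trans_le (Nat.add_le_add_left hp m)
    have hfirst : ∑ j ∈ Finset.range M, ψ (seqComp f (fun k => (u ++ w).getD k i) j y)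
        ≤ M * |C| := by
      refine (Finset.sum_le_card_nsmul _ _ |C| fun j _ => ?_).trans_eq (by simp)
      exact (le_abs_self _).trans ((hC _ (Set.mem_univ _)).trans (le_abs_self C))
    have hMn : (0 : ℝ) < ((M + n : ℕ) : ℝ) := by push_cast; positivity
    simp only [birkhoffAlong]
    rw [inv_mul_lt_iff₀ hMn, Finset.sum_range_add]
    simp only [M, seqComp_getD_length_add, wordComp_append, hy'z]
    change ∑ j ∈ Finset.range n, ψ ((f i)^[j] z) < n * a at hzsum
    have hMC : (M : ℝ) * (|C| + |c|) ≤ ((m + K : ℕ) : ℝ) * (|C| + |c|) :=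
      mul_le_mul_of_nonneg_right hMK (by positivity)
    have hMc : -((M : ℝ) * |c|) ≤ M * c := by
      rw [← mul_neg]
      exact mul_le_mul_of_nonneg_left (neg_abs_le c) (Nat.cast_nonneg M)
    push_cast at hn hMC hfirst ⊢
    linarith

/-- One direction of the Kuratowski–Ulam theorem, for open dense sets. -/
theorem residual_dense_sections {Y X : Type*} [TopologicalSpace Y] [TopologicalSpace X]
    [SecondCountableTopology X] {U : Set (Y × X)} (hU : IsOpen U) (hd : Dense U) :
    {y | Dense {x | (y, x) ∈ U}} ∈ residual Y := by
  have hB := TopologicalSpace.isBasis_countableBasis X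
  have key : ⋂ V ∈ TopologicalSpace.countableBasis X, Prod.fst '' (U ∩ Prod.snd ⁻¹' V)
      ∈ residual Y := by
    rw [countable_bInter_mem (TopologicalSpace.countable_countableBasis X)]
    intro V hV
    refine residual_of_dense_open
      (isOpenMap_fst _ (hU.inter ((hB.isOpen hV).preimage continuous_snd))) ?_
    rw [dense_iff_inter_open]
    rintro O hO ⟨y, hy⟩
    obtain ⟨x, hx⟩ := TopologicalSpace.nonempty_of_mem_countableBasis hV
    obtain ⟨q, hqO, hqU⟩ := hd.inter_open_nonempty (O ×ˢ V) (hO.prod (hB.isOpen hV))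
      ⟨(y, x), hy, hx⟩
    exact ⟨q.1, hqO.1, q, ⟨hqU, hqO.2⟩, rfl⟩
  filter_upwards [key] with y hy
  rw [hB.dense_iff]
  rintro V hV -
  obtain ⟨⟨y', x⟩, ⟨hqU, hqV⟩, rfl⟩ := Set.mem_iInter₂.1 hy V hV
  exact ⟨x, hqV, hqU⟩

/-- For generic `ω`, generic points have Birkhoff averages along `ω` frequently below any bound
exceeding the space average of an invariant measure of a generator. -/
theorem residual_frequently_birkhoffAlong_lt {X : Type*} [MetricSpace X] [CompactSpace X]
    [MeasurableSpace X] [BorelSpace X] {κ : ℕ} {f : Fin κ → X → X}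
    (hf : ∀ i, Continuous (f i)) (hfo : ∀ i, IsOpenMap (f i)) {ψ : X → ℝ} (hψ : Continuous ψ)
    (hfht : FrequentHittingTimes f) {i : Fin κ} {μ : Measure X} [IsProbabilityMeasure μ]
    (hμ : μ.map (f i) = μ) {c : ℝ} (hc : ∫ x, ψ x ∂μ < c) :
    ∀ᶠ ω in residual (ℕ → Fin κ), ∀ᶠ x in residual X,
      ∃ᶠ n in atTop, birkhoffAlong f ψ ω n x < c := by
  have h : ∀ᶠ ω in residual (ℕ → Fin κ), ∀ N, Dense {x | (ω, x) ∈ lowAverageSet f ψ c N} :=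
    eventually_countable_forall.2 fun N => residual_dense_sections
      (isOpen_lowAverageSet hf hψ c N) (dense_lowAverageSet hf hfo hψ hfht hμ hc N)
  filter_upwards [h] with ω hω
  have h' : ∀ᶠ x in residual X, ∀ N, (ω, x) ∈ lowAverageSet f ψ c N :=
    eventually_countable_forall.2 fun N => residual_of_dense_open
      ((isOpen_lowAverageSet hf hψ c N).preimage (Continuous.prodMk_right ω)) (hω N)
  filter_upwards [h'] with x hx
  exact frequently_atTop.2 hx

/-- **Baire genericity of irregular points for semigroup actions.**
Let `f₁, …, f_κ` be bi-Lipschitz homeomorphisms of a compact metric space `X` generating a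
semigroup action with frequent hitting times, and let `ψ` be continuous and not a coboundary
with respect to some generator. Then the set of `ω ∈ Σ_κ = {1,…,κ}^ℕ` for which the set of
points `x` with divergent Birkhoff averages along `ω` is residual in `X`, is itself a
residual subset of `Σ_κ`; and moreover the set `I_S(ψ)` of points which are Birkhoff
non-typical along some infinite word is residual in `X`. -/
theorem irregular_residual_semigroup {X : Type*} [MetricSpace X] [CompactSpace X]
    [MeasurableSpace X] [BorelSpace X] (κ : ℕ) (hκ : 1 ≤ κ)
    (f : Fin κ → X ≃ X)
    (hLip : ∀ i, ∃ L : NNReal, LipschitzWith L (f i))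
    (hLipInv : ∀ i, ∃ L : NNReal, LipschitzWith L (f i).symm)
    (ψ : X → ℝ) (hψ : Continuous ψ)
    (hfht : FrequentHittingTimes (fun i => (f i : X → X)))
    (hcob : ∃ i, NotCoboundary (f i : X → X) ψ) :
    {ω : ℕ → Fin κ |
        {x : X | ¬ ∃ l : ℝ, Tendsto
            (fun n : ℕ => (n : ℝ)⁻¹ *
              ∑ j ∈ Finset.range n, ψ (seqComp (fun i => (f i : X → X)) ω j x))
            atTop (nhds l)} ∈ residual X}
      ∈ residual (ℕ → Fin κ) ∧
    {x : X | ∃ ω : ℕ → Fin κ, ¬ ∃ l : ℝ, Tendsto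
        (fun n : ℕ => (n : ℝ)⁻¹ *
          ∑ j ∈ Finset.range n, ψ (seqComp (fun i => (f i : X → X)) ω j x))
        atTop (nhds l)} ∈ residual X := by
  have hf : ∀ i, Continuous (f i) := fun i => (hLip i).choose_spec.continuous
  have hfo : ∀ i, IsOpenMap (f i) := fun i => (Homeomorph.mk (f i) (hf i)
    (hLipInv i).choose_spec.continuous).isOpenMap
  obtain ⟨i, μ₁, μ₂, _, _, hμ₁, hμ₂, hlt⟩ := hcob
  obtain ⟨a, ha, ha₂⟩ := exists_between hlt
  obtain ⟨b, hab, hb⟩ := exists_between ha₂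
  have hlow := residual_frequently_birkhoffAlong_lt hf hfo hψ hfht hμ₁ ha
  have hhigh := residual_frequently_birkhoffAlong_lt hf hfo hψ.neg hfht hμ₂ (c := -b)
    (by simp only [Pi.neg_apply, integral_neg]; exact neg_lt_neg hb)
  have hres : {ω : ℕ → Fin κ |
      {x : X | ¬ ∃ l : ℝ, Tendsto
          (fun n : ℕ => (n : ℝ)⁻¹ *
            ∑ j ∈ Finset.range n, ψ (seqComp (fun i => (f i : X → X)) ω j x))
          atTop (nhds l)} ∈ residual X} ∈ residual (ℕ → Fin κ) := by
    filter_upwards [hlow, hhigh] with ω hω₁ hω₂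
    filter_upwards [hω₁, hω₂] with x hx₁ hx₂
    rintro ⟨l, hl⟩
    have hla : l ≤ a := le_of_tendsto_of_frequently hl (hx₁.mono fun _ h => h.le)
    have hbl : b ≤ l := ge_of_tendsto_of_frequently hl (hx₂.mono fun n h => by
      rw [birkhoffAlong_neg] at h
      exact (neg_lt_neg_iff.1 h).le)
    linarith
  have : Nonempty (Fin κ) := ⟨i⟩
  obtain ⟨ω, hω⟩ := (dense_of_mem_residual hres).nonempty
  exact ⟨hres, mem_of_superset hω fun x hx => ⟨ω, hx⟩⟩


end
end

section
/- Let (X,d) be a compact metric space, κ ≥ 1, and let f₁,…,f_κ : X → X be homeomorphisms. Suppose there is a nonempty subset S ⊆ {1,…,κ} such that f_i is an isometry of X for every i ∈ S and the subcollection {f_i : i ∈ S} satisfies property (C): for every ε > 0 there exists K(ε) ∈ ℕ such that for every x ∈ X there is an infinite word ω ∈ S^ℕ with ⋃_{j=0}^{K(ε)} f_ω^j(B(x,ε)) = X. Then the semigroup action generated by f₁,…,f_κ has frequent hitting times. -/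
open Metric

noncomputable section

theorem wordComp_map_range {X : Type*} {κ : ℕ} (f : Fin κ → X → X) (ω : ℕ → Fin κ) (n : ℕ) :
    wordComp f ((List.range n).map ω) = seqComp f ω n := by
  induction n with
  | zero => rfl
  | succ n ih =>
    funext x
    have hx := congrFun ih x
    simp only [wordComp] at hx
    simp [wordComp, seqComp, List.range_succ, hx]

theorem isometry_seqComp {X : Type*} [MetricSpace X] {κ : ℕ} {f : Fin κ → X → X}
    {ω : ℕ → Fin κ} (hf : ∀ n, Isometry (f (ω n))) (n : ℕ) : Isometry (seqComp f ω n) := by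
  induction n with
  | zero => exact isometry_id
  | succ n ih => exact (hf n).comp ih

theorem surjective_seqComp {X : Type*} {κ : ℕ} {f : Fin κ → X → X}
    {ω : ℕ → Fin κ} (hf : ∀ n, Function.Surjective (f (ω n))) (n : ℕ) :
    Function.Surjective (seqComp f ω n) := by
  induction n with
  | zero => exact Function.surjective_id
  | succ n ih => exact (hf n).comp ih

/-- **A sub-collection of isometries with the covering property (C) forces frequent
hitting times.** If `f₁, …, f_κ` are homeomorphisms of a compact metric space and there is a
nonempty `S ⊆ {1,…,κ}` such that each `f_i`, `i ∈ S`, is an isometry and the sub-collection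
satisfies property (C) — for every `ε > 0` there is `K(ε)` such that every `ε`-ball covers
`X` within `K(ε)` iterates along some infinite word with letters in `S` — then the whole
semigroup action has frequent hitting times. -/
theorem frequentHittingTimes_of_isometries_propertyC {X : Type*} [MetricSpace X]
    [CompactSpace X] (κ : ℕ) (f : Fin κ → X ≃ₜ X)
    (S : Set (Fin κ)) (hS : S.Nonempty)
    (hiso : ∀ i ∈ S, Isometry (f i : X → X))
    (hC : ∀ ε : ℝ, 0 < ε → ∃ K : ℕ, ∀ x : X, ∃ ω : ℕ → Fin κ, (∀ n, ω n ∈ S) ∧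
      (⋃ j ∈ Finset.range (K + 1),
        seqComp (fun i => (f i : X → X)) ω j '' Metric.ball x ε) = Set.univ) :
    FrequentHittingTimes (fun i => (f i : X → X)) := by
  intro ε hε
  obtain ⟨K, hK⟩ := hC (ε / 2) (half_pos hε)
  refine ⟨K, fun x₁ x₂ r hr hrε => ?_⟩
  obtain ⟨ω, hωS, hcover⟩ := hK x₁
  have hx₂ : x₂ ∈ ⋃ j ∈ Finset.range (K + 1),
      seqComp (fun i => (f i : X → X)) ω j '' Metric.ball x₁ (ε / 2) :=
    hcover ▸ Set.mem_univ x₂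
  simp only [Set.mem_iUnion, Finset.mem_range] at hx₂
  obtain ⟨j, hj, y, hy, rfl⟩ := hx₂
  have hisom := isometry_seqComp (f := fun i => (f i : X → X)) (fun n => hiso _ (hωS n)) j
  have hsurj := surjective_seqComp (f := fun i => (f i : X → X)) (fun n => (f (ω n)).surjective) j
  refine ⟨j, Nat.lt_succ_iff.mp hj, (List.range j).map ω, by simp,
    seqComp (fun i => (f i : X → X)) ω j y, Set.subset_inter ?_ (ball_subset_ball (by linarith))⟩
  rw [wordComp_map_range]
  intro u hu
  obtain ⟨v, rfl⟩ := hsurj u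
  refine ⟨v, ?_, rfl⟩
  rw [mem_ball, hisom.dist_eq] at hu
  rw [mem_ball] at hy ⊢
  linarith [dist_triangle v y x₁]

end
end

section
/- Let (X,d) be a compact metric space and let f : X → X be a minimal isometry, i.e. d(f(x),f(y)) = d(x,y) for all x,y ∈ X and for every x ∈ X the forward orbit {f^n(x) : n ≥ 0} is dense in X. Then f has frequent hitting times. -/
open Metric

noncomputable section

/-- A single continuous map `f` of a metric space has *frequent hitting times*:
for every `ε > 0` there is `K(ε)` such that for all `x₁, x₂ ∈ X` and every radius
`0 < r ≤ ε/2` there are `0 ≤ p ≤ K(ε)` and a point `z` with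
`B(z, r/2) ⊆ f^p(B(x₁,ε)) ∩ B(x₂,r)`. -/
def FrequentHittingTimesMap {X : Type*} [MetricSpace X] (f : X → X) : Prop :=
  ∀ ε : ℝ, 0 < ε → ∃ K : ℕ, ∀ x₁ x₂ : X, ∀ r : ℝ, 0 < r → r ≤ ε / 2 →
    ∃ p ≤ K, ∃ z : X,
      Metric.ball z (r / 2) ⊆ f^[p] '' Metric.ball x₁ ε ∩ Metric.ball x₂ r

/-- The iterates of an isometry are isometries. -/
theorem Isometry.iterate_isometry {X : Type*} [PseudoEMetricSpace X] {f : X → X}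
    (hiso : Isometry f) : ∀ n : ℕ, Isometry f^[n]
  | 0 => isometry_id
  | n + 1 => (hiso.iterate_isometry n).comp hiso

/-- A continuous self-map of a compact metric space all of whose forward orbits are dense is
surjective. -/
theorem Continuous.surjective_of_dense_orbits {X : Type*} [MetricSpace X] [CompactSpace X]
    {f : X → X} (hf : Continuous f)
    (hmin : ∀ x : X, Dense (Set.range fun n : ℕ => f^[n] x)) : Function.Surjective f := by
  intro y
  have hsub : (Set.range fun n : ℕ => f^[n] (f y)) ⊆ Set.range f := by
    rintro _ ⟨n, rfl⟩
    exact ⟨f^[n] y, (Function.iterate_succ_apply' f n y).symm.trans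
      (Function.iterate_succ_apply f n y)⟩
  exact (isCompact_range hf).isClosed.closure_subset_iff.2 hsub (hmin (f y) y)

/-- If all forward orbits of a continuous self-map of a compact metric space are dense, the time
needed to come `δ`-close to a given point is bounded uniformly in both points. -/
theorem exists_uniform_hitting_time {X : Type*} [MetricSpace X] [CompactSpace X]
    {f : X → X} (hf : Continuous f)
    (hmin : ∀ x : X, Dense (Set.range fun n : ℕ => f^[n] x)) {δ : ℝ} (hδ : 0 < δ) :
    ∃ K : ℕ, ∀ x y : X, ∃ p ≤ K, dist (f^[p] x) y < δ := by
  obtain ⟨t, ht⟩ := isCompact_univ.elim_finite_subcover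
    (fun p : ℕ => {q : X × X | dist (f^[p] q.1) q.2 < δ})
    (fun p => isOpen_lt (((hf.iterate p).comp continuous_fst).dist continuous_snd)
      continuous_const)
    (fun q _ => by
      obtain ⟨_, ⟨n, rfl⟩, hn⟩ := (hmin q.1).exists_dist_lt q.2 hδ
      exact Set.mem_iUnion.2 ⟨n, by simpa [dist_comm] using hn⟩)
  refine ⟨t.sup id, fun x y => ?_⟩
  obtain ⟨p, hp, hlt⟩ := Set.mem_iUnion₂.1 (ht (Set.mem_univ (x, y)))
  exact ⟨p, Finset.le_sup (f := id) hp, hlt⟩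

/-- **Minimal isometries have frequent hitting times.** If `f` is an isometry of a compact
metric space all of whose forward orbits are dense, then `f` has frequent hitting times. -/
theorem frequentHittingTimes_of_minimal_isometry {X : Type*} [MetricSpace X]
    [CompactSpace X] (f : X → X) (hiso : Isometry f)
    (hmin : ∀ x : X, Dense (Set.range fun n : ℕ => f^[n] x)) :
    FrequentHittingTimesMap f := by
  intro ε hε
  obtain ⟨K, hK⟩ := exists_uniform_hitting_time hiso.continuous hmin (half_pos hε)
  refine ⟨K, fun x₁ x₂ r hr hrε => ?_⟩
  obtain ⟨p, hpK, hp⟩ := hK x₁ x₂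
  refine ⟨p, hpK, x₂, fun y hy => ⟨?_, Metric.ball_subset_ball (by linarith) hy⟩⟩
  obtain ⟨w, rfl⟩ := (hiso.continuous.surjective_of_dense_orbits hmin).iterate p y
  refine ⟨w, ?_, rfl⟩
  rw [Metric.mem_ball, ← (hiso.iterate_isometry p).dist_eq]
  have htri := dist_triangle_right (f^[p] w) (f^[p] x₁) x₂
  rw [Metric.mem_ball] at hy
  linarith

end
end

section
/- Let 𝕊¹ = ℝ/ℤ be the circle equipped with its quotient metric, and let α ∈ ℝ be irrational. Then the rotation R_α : 𝕊¹ → 𝕊¹ given by R_α(x) = x + α (mod 1) has frequent hitting times. -/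
open Metric

noncomputable section

/-- If the multiples of `a` are dense in a compact group, then finitely many nonnegative multiples
of `a` form a `δ`-net. -/
theorem exists_forall_exists_le_dist_nsmul_lt {G : Type*} [SeminormedAddCommGroup G]
    [CompactSpace G] {a : G} (ha : DenseRange (fun n : ℤ => n • a)) {δ : ℝ} (hδ : 0 < δ) :
    ∃ K : ℕ, ∀ y : G, ∃ p ≤ K, dist y (p • a) < δ := by
  obtain ⟨t, ht⟩ := isCompact_univ.elim_finite_subcover
    (fun n : ℤ => ball (n • a) δ) (fun _ => isOpen_ball) fun y _ => by
      obtain ⟨n, hn⟩ := ha.exists_dist_lt y hδ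
      exact Set.mem_iUnion.2 ⟨n, hn⟩
  set N : ℕ := t.sup Int.natAbs
  refine ⟨2 * N, fun y => ?_⟩
  obtain ⟨n, hnt, hn⟩ := Set.mem_iUnion₂.1 (ht (Set.mem_univ (y - (N : ℤ) • a)))
  have hnN : n.natAbs ≤ N := Finset.le_sup (f := Int.natAbs) hnt
  refine ⟨(n + N).toNat, by lia, ?_⟩
  have hcast : (((n + N).toNat : ℕ) : ℤ) = n + N := by lia
  rw [← natCast_zsmul, hcast, add_zsmul, dist_eq_norm, sub_add_eq_sub_sub_swap, ← dist_eq_norm]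
  exact hn

/-- A translation of a compact group by an element whose multiples are dense has frequent hitting
times. -/
theorem frequentHittingTimesMap_add_right {G : Type*} [NormedAddCommGroup G] [CompactSpace G]
    {a : G} (ha : DenseRange (fun n : ℤ => n • a)) :
    FrequentHittingTimesMap (fun x : G => x + a) := by
  intro ε hε
  obtain ⟨K, hK⟩ := exists_forall_exists_le_dist_nsmul_lt ha (half_pos hε)
  refine ⟨K, fun x₁ x₂ r hr hrε => ?_⟩
  obtain ⟨p, hpK, hp⟩ := hK (x₂ - x₁)
  refine ⟨p, hpK, x₂, Set.subset_inter (fun y hy => ?_) (ball_subset_ball (by linarith))⟩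
  rw [add_right_iterate]
  refine ⟨y - p • a, ?_, sub_add_cancel _ _⟩
  have hsplit : y - p • a - x₁ = (y - x₂) + (x₂ - x₁ - p • a) := by abel
  rw [mem_ball, dist_eq_norm] at hy ⊢
  rw [dist_eq_norm] at hp
  rw [hsplit]
  linarith [norm_add_le (y - x₂) (x₂ - x₁ - p • a)]

/-- **Irrational circle rotations have frequent hitting times.** On the circle
`𝕊¹ = ℝ/ℤ` with its quotient metric, the rotation `R_α(x) = x + α (mod 1)` by an
irrational number `α` has frequent hitting times. -/
theorem frequentHittingTimes_irrational_rotation (α : ℝ) (hα : Irrational α) :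
    FrequentHittingTimesMap (fun x : AddCircle (1 : ℝ) => x + (α : AddCircle (1 : ℝ))) := by
  exact frequentHittingTimesMap_add_right
    (AddCircle.denseRange_zsmul_coe_iff.2 (by rwa [div_one]))

end
end

section
/- Let T : ℝ^d → ℝ^d be an invertible linear map and suppose ℝ^d = E⁺ ⊕ E⁻ is a direct sum of T-invariant linear subspaces (T(E⁺) = E⁺ and T(E⁻) = E⁻) such that for some λ > 1 one has ‖T v‖ ≥ λ‖v‖ for every v ∈ E⁺ and ‖T v‖ ≤ λ⁻¹‖v‖ for every v ∈ E⁻ (Euclidean norm). Then there exist θ ∈ (0,1) and ζ > 0 such that the cones C⁺ := {w = w⁺ + w⁻ : w⁺ ∈ E⁺, w⁻ ∈ E⁻, ‖w⁻‖ ≤ ζ‖w⁺‖} and C⁻ := {w = w⁺ + w⁻ : w⁺ ∈ E⁺, w⁻ ∈ E⁻, ‖w⁺‖ ≤ ζ‖w⁻‖} satisfy: (i) T(C⁺) ⊆ C⁺ and T⁻¹(C⁻) ⊆ C⁻; (ii) ‖T^n w‖ ≥ θ^{−n}‖w‖ for every w ∈ C⁺ and every n ≥ 1; (iii) ‖T^n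 w‖ ≤ θ^n ‖w‖ whenever w ∈ ℝ^d satisfies T^j w ∈ C⁻ for every 0 ≤ j ≤ n. -/
noncomputable section

/-- The cone `{w = a + b : a ∈ E₁, b ∈ E₂, ‖b‖ ≤ ζ‖a‖}` associated to a pair of
subspaces of `ℝ^d` and a width `ζ`. -/
def cone {d : ℕ} (E₁ E₂ : Submodule ℝ (EuclideanSpace ℝ (Fin d))) (ζ : ℝ) :
    Set (EuclideanSpace ℝ (Fin d)) :=
  {w | ∃ a ∈ E₁, ∃ b ∈ E₂, w = a + b ∧ ‖b‖ ≤ ζ * ‖a‖}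

section OneStep

variable {d : ℕ} {E₁ E₂ : Submodule ℝ (EuclideanSpace ℝ (Fin d))} {ζ lam : ℝ}

/-- A linear map preserving `E₁` and `E₂`, and expanding `E₁` while contracting `E₂`,
preserves every cone around `E₁`. -/
theorem map_mem_cone
    (T : EuclideanSpace ℝ (Fin d) →ₗ[ℝ] EuclideanSpace ℝ (Fin d))
    (h₁ : ∀ v ∈ E₁, T v ∈ E₁) (h₂ : ∀ v ∈ E₂, T v ∈ E₂)
    (hexp : ∀ v ∈ E₁, ‖v‖ ≤ ‖T v‖) (hcontr : ∀ v ∈ E₂, ‖T v‖ ≤ ‖v‖) (hζ : 0 ≤ ζ)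
    {w : EuclideanSpace ℝ (Fin d)} (hw : w ∈ cone E₁ E₂ ζ) : T w ∈ cone E₁ E₂ ζ := by
  obtain ⟨a, ha, b, hb, rfl, hab⟩ := hw
  exact ⟨T a, h₁ a ha, T b, h₂ b hb, map_add T a b,
    (hcontr b hb).trans (hab.trans (mul_le_mul_of_nonneg_left (hexp a ha) hζ))⟩

/-- A linear map expanding `E₁` by `lam` and not expanding `E₂` expands every vector of the cone
of width `ζ` around `E₁` by any factor `μ` with `μ * (1 + ζ) ≤ lam - ζ`. -/
theorem mul_norm_le_norm_map_of_mem_cone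
    (T : EuclideanSpace ℝ (Fin d) →ₗ[ℝ] EuclideanSpace ℝ (Fin d))
    (hexp : ∀ v ∈ E₁, lam * ‖v‖ ≤ ‖T v‖) (hcontr : ∀ v ∈ E₂, ‖T v‖ ≤ ‖v‖)
    {μ : ℝ} (hμ : 0 ≤ μ) (hμζ : μ * (1 + ζ) ≤ lam - ζ)
    {w : EuclideanSpace ℝ (Fin d)} (hw : w ∈ cone E₁ E₂ ζ) : μ * ‖w‖ ≤ ‖T w‖ := by
  obtain ⟨a, ha, b, hb, rfl, hab⟩ := hw
  calc μ * ‖a + b‖ ≤ μ * (‖a‖ + ζ * ‖a‖) := by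
        gcongr
        exact (norm_add_le a b).trans (by gcongr)
    _ = μ * (1 + ζ) * ‖a‖ := by ring
    _ ≤ (lam - ζ) * ‖a‖ := by gcongr
    _ ≤ ‖T a‖ - ‖T b‖ := by linarith [hexp a ha, hcontr b hb]
    _ ≤ ‖T (a + b)‖ := by
        rw [map_add]
        exact norm_sub_le_norm_add _ _

/-- If `w` and `T w` both lie in the cone of width `ζ` around a subspace `E₁` which `T` contracts
by `lam⁻¹`, then `T` contracts `w` by any factor `θ` with `(1 + ζ) * lam⁻¹ ≤ θ * (1 - ζ)`. -/
theorem norm_map_le_of_mem_cone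
    (T : EuclideanSpace ℝ (Fin d) →ₗ[ℝ] EuclideanSpace ℝ (Fin d))
    (hdisj : Disjoint E₁ E₂)
    (h₁ : ∀ v ∈ E₁, T v ∈ E₁) (h₂ : ∀ v ∈ E₂, T v ∈ E₂)
    (hcontr : ∀ v ∈ E₁, ‖T v‖ ≤ lam⁻¹ * ‖v‖) (hζ : 0 ≤ ζ)
    {θ : ℝ} (hθ : 0 ≤ θ) (hθζ : (1 + ζ) * lam⁻¹ ≤ θ * (1 - ζ))
    {w : EuclideanSpace ℝ (Fin d)} (hw : w ∈ cone E₁ E₂ ζ) (hTw : T w ∈ cone E₁ E₂ ζ) :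
    ‖T w‖ ≤ θ * ‖w‖ := by
  obtain ⟨a, ha, b, hb, rfl, hab⟩ := hw
  obtain ⟨a', ha', b', hb', heq, hab'⟩ := hTw
  have hdiff : a' - T a = T b - b' := by
    rw [map_add] at heq
    rw [sub_eq_sub_iff_add_eq_add, ← heq, add_comm]
  have hzero : a' - T a = 0 :=
    Submodule.disjoint_def.mp hdisj _ (E₁.sub_mem ha' (h₁ a ha))
      (hdiff ▸ E₂.sub_mem (h₂ b hb) hb')
  obtain rfl : a' = T a := sub_eq_zero.mp hzero
  calc ‖T (a + b)‖ ≤ ‖T a‖ + ζ * ‖T a‖ := by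
        rw [heq]
        exact (norm_add_le _ _).trans (by gcongr)
    _ = (1 + ζ) * ‖T a‖ := by ring
    _ ≤ (1 + ζ) * (lam⁻¹ * ‖a‖) := by
        gcongr
        exact hcontr a ha
    _ = (1 + ζ) * lam⁻¹ * ‖a‖ := by ring
    _ ≤ θ * (1 - ζ) * ‖a‖ := by gcongr
    _ = θ * (‖a‖ - ζ * ‖a‖) := by ring
    _ ≤ θ * (‖a‖ - ‖b‖) := by gcongr
    _ ≤ θ * ‖a + b‖ := by
        gcongr
        exact norm_sub_le_norm_add _ _

end OneStep

/-- **Invariant cone fields for hyperbolic linear maps.** Suppose `T : ℝ^d → ℝ^d` is an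
invertible linear map, `ℝ^d = E⁺ ⊕ E⁻` with `T`-invariant subspaces, and for some `λ > 1`
the map `T` expands vectors of `E⁺` by at least `λ` and contracts vectors of `E⁻` by at
least `λ⁻¹`. Then there are `θ ∈ (0,1)` and `ζ > 0` such that the cones
`C⁺ = {‖w⁻‖ ≤ ζ‖w⁺‖}` and `C⁻ = {‖w⁺‖ ≤ ζ‖w⁻‖}` satisfy: (i) `T(C⁺) ⊆ C⁺` and
`T⁻¹(C⁻) ⊆ C⁻`; (ii) `‖T^n w‖ ≥ θ^{-n}‖w‖` for `w ∈ C⁺` and `n ≥ 1`; (iii)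
`‖T^n w‖ ≤ θ^n ‖w‖` whenever `T^j w ∈ C⁻` for all `0 ≤ j ≤ n`. -/
theorem hyperbolic_invariant_cones (d : ℕ)
    (T : EuclideanSpace ℝ (Fin d) ≃ₗ[ℝ] EuclideanSpace ℝ (Fin d))
    (Ep Em : Submodule ℝ (EuclideanSpace ℝ (Fin d)))
    (hcompl : IsCompl Ep Em)
    (hTp : Submodule.map (T : EuclideanSpace ℝ (Fin d) →ₗ[ℝ] EuclideanSpace ℝ (Fin d)) Ep = Ep)
    (hTm : Submodule.map (T : EuclideanSpace ℝ (Fin d) →ₗ[ℝ] EuclideanSpace ℝ (Fin d)) Em = Em)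
    (lam : ℝ) (hlam : 1 < lam)
    (hexp : ∀ v ∈ Ep, lam * ‖v‖ ≤ ‖T v‖)
    (hcontr : ∀ v ∈ Em, ‖T v‖ ≤ lam⁻¹ * ‖v‖) :
    ∃ θ : ℝ, θ ∈ Set.Ioo (0 : ℝ) 1 ∧ ∃ ζ : ℝ, 0 < ζ ∧
      (∀ w ∈ cone Ep Em ζ, T w ∈ cone Ep Em ζ) ∧
      (∀ w ∈ cone Em Ep ζ, T.symm w ∈ cone Em Ep ζ) ∧
      (∀ w ∈ cone Ep Em ζ, ∀ n : ℕ, 1 ≤ n → θ ^ (-(n : ℤ)) * ‖w‖ ≤ ‖(⇑T)^[n] w‖) ∧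
      (∀ (w : EuclideanSpace ℝ (Fin d)) (n : ℕ),
        (∀ j ≤ n, (⇑T)^[j] w ∈ cone Em Ep ζ) → ‖(⇑T)^[n] w‖ ≤ θ ^ n * ‖w‖) := by
  have hlam0 : 0 < lam := by linarith
  have hinv : lam⁻¹ ≤ 1 := inv_le_one_of_one_le₀ hlam.le
  have hp : ∀ v ∈ Ep, T v ∈ Ep := fun v hv => hTp.le (Submodule.mem_map_of_mem hv)
  have hm : ∀ v ∈ Em, T v ∈ Em := fun v hv => hTm.le (Submodule.mem_map_of_mem hv)
  have hp_symm : ∀ v ∈ Ep, T.symm v ∈ Ep := fun v hv => by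
    obtain ⟨u, hu, rfl⟩ := hTp.ge hv
    simpa using hu
  have hm_symm : ∀ v ∈ Em, T.symm v ∈ Em := fun v hv => by
    obtain ⟨u, hu, rfl⟩ := hTm.ge hv
    simpa using hu
  have hexp_one : ∀ v ∈ Ep, ‖v‖ ≤ ‖T v‖ := fun v hv =>
    (le_mul_of_one_le_left (norm_nonneg v) hlam.le).trans (hexp v hv)
  have hcontr_one : ∀ v ∈ Em, ‖T v‖ ≤ ‖v‖ := fun v hv =>
    (hcontr v hv).trans (mul_le_of_le_one_left (norm_nonneg v) hinv)
  obtain ⟨μ, hμ⟩ : ∃ μ, μ = (lam + 1) / 2 := ⟨_, rfl⟩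
  obtain ⟨ζ, hζ⟩ : ∃ ζ, ζ = (lam - μ) / (lam + μ) := ⟨_, rfl⟩
  have hμ1 : 1 < μ := by linarith
  have hμ0 : 0 < μ := by linarith
  have hζ0 : 0 < ζ := hζ ▸ div_pos (by linarith) (by linarith)
  have hζμ : ζ * (lam + μ) = lam - μ := by
    rw [hζ, div_mul_cancel₀ _ (by linarith)]
  have hexpand : μ * (1 + ζ) ≤ lam - ζ := by nlinarith
  have hcontract : (1 + ζ) * lam⁻¹ ≤ μ⁻¹ * (1 - ζ) := by
    rw [← div_eq_mul_inv, inv_mul_eq_div, div_le_div_iff₀ hlam0 hμ0]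
    linarith
  have hinvariant : ∀ w ∈ cone Ep Em ζ, T w ∈ cone Ep Em ζ := fun w hw =>
    map_mem_cone T.toLinearMap hp hm hexp_one hcontr_one hζ0.le hw
  refine ⟨μ⁻¹, ⟨inv_pos.mpr hμ0, inv_lt_one_of_one_lt₀ hμ1⟩, ζ, hζ0, hinvariant, ?_, ?_, ?_⟩
  · refine fun w hw => map_mem_cone T.symm.toLinearMap hm_symm hp_symm
      (fun v hv => ?_) (fun v hv => ?_) hζ0.le hw
    · simpa using hcontr_one _ (hm_symm v hv)
    · simpa using hexp_one _ (hp_symm v hv)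
  · rintro w hw n -
    rw [inv_zpow, zpow_neg, inv_inv, zpow_natCast]
    induction n with
    | zero => simp
    | succ n ih =>
      rw [Function.iterate_succ_apply']
      calc μ ^ (n + 1) * ‖w‖ = μ * (μ ^ n * ‖w‖) := by ring
        _ ≤ μ * ‖(⇑T)^[n] w‖ := by gcongr
        _ ≤ ‖T ((⇑T)^[n] w)‖ :=
            mul_norm_le_norm_map_of_mem_cone T.toLinearMap hexp hcontr_one hμ0.le hexpand
              (Set.MapsTo.iterate hinvariant n hw)
  · intro w n hw
    induction n with
    | zero => simp
    | succ n ih =>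
      have hw' := hw (n + 1) le_rfl
      rw [Function.iterate_succ_apply'] at hw' ⊢
      calc ‖T ((⇑T)^[n] w)‖ ≤ μ⁻¹ * ‖(⇑T)^[n] w‖ :=
            norm_map_le_of_mem_cone T.toLinearMap hcompl.symm.disjoint hm hp hcontr hζ0.le
              (inv_pos.mpr hμ0).le hcontract (hw n n.le_succ) hw'
        _ ≤ μ⁻¹ * (μ⁻¹ ^ n * ‖w‖) := by
            gcongr
            exact ih fun j hj => hw j (hj.trans n.le_succ)
        _ = μ⁻¹ ^ (n + 1) * ‖w‖ := by ring

end
end
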